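/- arXiv:2107.04148 — 11 statements merged into one kernel-verified Lean document; each statement's English description precedes it below -/
import Mathlib

section
/- Let n ≥ 2 be an integer and a, λ ∈ ℂ with λ^n + a ≠ 0. Define the n×n complex matrix M by M_{i,j} = λ^{n−1−(j−i)}/(λ^n + a) if i ≤ j, and M_{i,j} = −λ^{i−j−1}·a/(λ^n + a) if i > j (indices 0,…,n−1). Then M·(λ·I + Λₙ(a)) = I and (λ·I + Λₙ(a))·M = I; in particular λ·I + Λₙ(a) is invertible and its inverse is the Toeplitz matrix M. -/
/-!
Left multiplication by `λ·I + Λₙ(a)` replaces row `i` of a matrix `M` by `λ·Mᵢ - Mᵢ₊₁` when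
`i < n - 1`, and the last row by `λ·Mₙ₋₁ + a·M₀`. For `M = ResMat n a λ` each step
down a column multiplies the entry by `λ`, except when crossing from the diagonal to the entry
below it, and `a` times the top entry of a column is `-λ` times its bottom entry unless the bottom
entry is on the diagonal. So these combinations vanish off the diagonal, and on it they equal
`(λ^n + a)/(λ^n + a) = 1`. This gives one of the two products; the other one follows because a
one-sided inverse of a square matrix over a commutative ring is two-sided.
-/

/-- The companion-type matrix `Λₙ(a)`: entries `-1` on the superdiagonal,
`a` in the bottom-left corner, `0` elsewhere. -/
def LamMat (n : ℕ) (a : ℂ) : Matrix (Fin n) (Fin n) ℂ :=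
  Matrix.of fun i j =>
    if (j : ℕ) = (i : ℕ) + 1 then -1
    else if (i : ℕ) = n - 1 ∧ (j : ℕ) = 0 then a
    else 0

/-- The explicit Toeplitz inverse of `λ·I + Λₙ(a)`:
`M_{i,j} = λ^{n−1−(j−i)}/(λ^n + a)` if `i ≤ j`, and
`M_{i,j} = −λ^{i−j−1}·a/(λ^n + a)` if `i > j`. -/
noncomputable def ResMat (n : ℕ) (a lam : ℂ) : Matrix (Fin n) (Fin n) ℂ :=
  Matrix.of fun i j =>
    if (i : ℕ) ≤ (j : ℕ) then lam ^ (n - 1 - ((j : ℕ) - (i : ℕ))) / (lam ^ n + a)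
    else -(lam ^ ((i : ℕ) - (j : ℕ) - 1) * a) / (lam ^ n + a)

lemma LamMat_mul_apply_of_lt {n : ℕ} (a : ℂ) (M : Matrix (Fin n) (Fin n) ℂ) (i j : Fin n)
    (hi : (i : ℕ) + 1 < n) : (LamMat n a * M) i j = -M ⟨i + 1, hi⟩ j := by
  rw [Matrix.mul_apply, Finset.sum_eq_single ⟨(i : ℕ) + 1, hi⟩]
  · simp [LamMat]
  · intro k _ hk
    have h1 : (k : ℕ) ≠ (i : ℕ) + 1 := fun e => hk (Fin.ext e)
    have h2 : ¬ ((i : ℕ) = n - 1 ∧ (k : ℕ) = 0) := by omega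
    simp only [LamMat, Matrix.of_apply, if_neg h1, if_neg h2, zero_mul]
  · simp

lemma LamMat_mul_apply_last {n : ℕ} (a : ℂ) (M : Matrix (Fin n) (Fin n) ℂ) (i j : Fin n)
    (hn : 0 < n) (hi : (i : ℕ) = n - 1) : (LamMat n a * M) i j = a * M ⟨0, hn⟩ j := by
  rw [Matrix.mul_apply, Finset.sum_eq_single ⟨0, hn⟩]
  · simp [LamMat, hi]
  · intro k _ hk
    have h0 : (k : ℕ) ≠ 0 := fun e => hk (Fin.ext e)
    have h1 : (k : ℕ) ≠ (i : ℕ) + 1 := by have := k.isLt; omega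
    have h2 : ¬ ((i : ℕ) = n - 1 ∧ (k : ℕ) = 0) := by omega
    simp only [LamMat, Matrix.of_apply, if_neg h1, if_neg h2, zero_mul]
  · simp

lemma add_LamMat_mul_ResMat (n : ℕ) (a lam : ℂ) (h : lam ^ n + a ≠ 0) :
    (lam • (1 : Matrix (Fin n) (Fin n) ℂ) + LamMat n a) * ResMat n a lam = 1 := by
  ext i j
  have hi := i.isLt
  have hj := j.isLt
  rw [add_mul, Matrix.smul_mul, one_mul, Matrix.add_apply, Matrix.smul_apply, smul_eq_mul,
    Matrix.one_apply]
  by_cases hlast : (i : ℕ) + 1 < n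
  · rw [LamMat_mul_apply_of_lt a _ i j hlast]
    simp only [ResMat, Matrix.of_apply]
    rcases lt_trichotomy (i : ℕ) (j : ℕ) with hij | hij | hij
    · rw [if_pos hij.le, if_pos (by omega), if_neg (by rintro rfl; omega)]
      have e : n - 1 - ((j : ℕ) - ((i : ℕ) + 1)) = n - 1 - ((j : ℕ) - i) + 1 := by omega
      rw [e, pow_succ]
      ring
    · rw [if_pos hij.le, if_neg (by omega), if_pos (Fin.ext hij)]
      have e1 : n - 1 - ((j : ℕ) - i) = n - 1 := by omega
      have e2 : (i : ℕ) + 1 - j - 1 = 0 := by omega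
      have e3 : lam ^ n = lam * lam ^ (n - 1) := by rw [← pow_succ']; congr 1; omega
      rw [e1, e2]
      field_simp
      rw [e3]
    · rw [if_neg (by omega), if_neg (by omega), if_neg (by rintro rfl; omega)]
      have e : (i : ℕ) + 1 - j - 1 = (i : ℕ) - j - 1 + 1 := by omega
      rw [e, pow_succ]
      ring
  · have hi' : (i : ℕ) = n - 1 := by omega
    rw [LamMat_mul_apply_last a _ i j (by omega) hi']
    simp only [ResMat, Matrix.of_apply]
    rw [if_pos (Nat.zero_le (j : ℕ))]
    by_cases hij : (i : ℕ) = j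
    · rw [if_pos hij.le, if_pos (Fin.ext hij)]
      have e1 : n - 1 - ((j : ℕ) - i) = n - 1 := by omega
      have e2 : n - 1 - ((j : ℕ) - 0) = 0 := by omega
      have e3 : lam ^ n = lam * lam ^ (n - 1) := by rw [← pow_succ']; congr 1; omega
      rw [e1, e2]
      field_simp
      rw [e3]
    · rw [if_neg (by omega), if_neg (fun e => hij (congrArg Fin.val e))]
      have e : n - 1 - ((j : ℕ) - 0) = (i : ℕ) - j - 1 + 1 := by omega
      rw [e, pow_succ]
      ring

/-- If `λ^n + a ≠ 0` then `M·(λ·I + Λₙ(a)) = I` and `(λ·I + Λₙ(a))·M = I`;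
in particular `λ·I + Λₙ(a)` is invertible and its inverse is the Toeplitz
matrix `M = ResMat n a λ`. -/
theorem ResMat_mul_and_mul_ResMat (n : ℕ) (hn : 2 ≤ n) (a lam : ℂ)
    (h : lam ^ n + a ≠ 0) :
    ResMat n a lam * (lam • (1 : Matrix (Fin n) (Fin n) ℂ) + LamMat n a) = 1 ∧
    (lam • (1 : Matrix (Fin n) (Fin n) ℂ) + LamMat n a) * ResMat n a lam = 1 ∧
    IsUnit (lam • (1 : Matrix (Fin n) (Fin n) ℂ) + LamMat n a) ∧
    (lam • (1 : Matrix (Fin n) (Fin n) ℂ) + LamMat n a)⁻¹ = ResMat n a lam := by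
  have hR := add_LamMat_mul_ResMat n a lam h
  have hL := mul_eq_one_comm.mp hR
  exact ⟨hL, hR, IsUnit.of_mul_eq_one _ hR, Matrix.inv_eq_right_inv hR⟩
end

section
/- Let X be a nontrivial complex Banach space, A : X → X a bounded linear operator, n ≥ 2 an integer, and Λ the bounded linear operator on the product Banach space Xⁿ (functions Fin n → X) defined by (Λu)_i = −u_{i+1} for 0 ≤ i ≤ n−2 and (Λu)_{n−1} = A u_0. Then the spectrum of −Λ equals { λ ∈ ℂ : λ^n belongs to the spectrum of −A }. -/
/-!
Solving `(λ + Λ) u = f` row by row, the first `n - 1` equations say `u_{i+1} = λ u_i - f_i`, so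
they determine `u` from `u_0 = x` by a recursion (`shiftOrbit`), and the last equation says that
one further step of that recursion gives `-A x` (`apply_eq_iff_shiftOrbit`). By linearity the
`n`-th step is `λ ^ n x` plus a term depending on `f` alone (`shiftOrbit_eq`), so the last
equation reads `(λ ^ n + A) x = g f`, where every vector occurs as a `g f`. Hence `λ + Λ` is
bijective iff `λ ^ n + A` is, and by the open mapping theorem bijectivity is invertibility in the
algebra of bounded operators.
-/

/-- The sequence with initial value `x` and `s (k + 1) = c • s k - f k`, where `f` is extended by
zero beyond its index range. -/
def shiftOrbit {X : Type*} [NormedAddCommGroup X] [NormedSpace ℂ X] {n : ℕ}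
    (c : ℂ) (f : Fin n → X) (x : X) : ℕ → X
  | 0 => x
  | k + 1 => c • shiftOrbit c f x k - if h : k < n then f ⟨k, h⟩ else 0

section

variable {X : Type*} [NormedAddCommGroup X] [NormedSpace ℂ X]

lemma shiftOrbit_eq {n : ℕ} (c : ℂ) (f : Fin n → X) (x : X) (k : ℕ) :
    shiftOrbit c f x k = c ^ k • x + shiftOrbit c f 0 k := by
  induction k with
  | zero => simp [shiftOrbit]
  | succ k ih =>
    simp only [shiftOrbit]
    rw [ih, smul_add, smul_smul, pow_succ', add_sub_assoc]

lemma shiftOrbit_zero_zero {n : ℕ} (c : ℂ) (k : ℕ) :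
    shiftOrbit c (0 : Fin n → X) 0 k = 0 := by
  induction k with
  | zero => rfl
  | succ k ih => simp [shiftOrbit, ih]

lemma shiftOrbit_single_of_le {m : ℕ} (c : ℂ) (y : X) (k : ℕ) (hk : k ≤ m) :
    shiftOrbit c (Pi.single (Fin.last m) y : Fin (m + 1) → X) 0 k = 0 := by
  induction k with
  | zero => rfl
  | succ k ih =>
    have hne : (⟨k, by omega⟩ : Fin (m + 1)) ≠ Fin.last m := by
      intro h
      have := congrArg Fin.val h
      simp at this
      omega
    have hlt : k < m + 1 := by omega
    simp only [shiftOrbit]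
    rw [ih (by omega), dif_pos hlt, Pi.single_eq_of_ne hne]
    simp

/-- Data supported in the last coordinate realise every possible right-hand side of the reduced
equation for `u_0`. -/
lemma shiftOrbit_single_last {m : ℕ} (c : ℂ) (y : X) :
    shiftOrbit c (Pi.single (Fin.last m) y : Fin (m + 1) → X) 0 (m + 1) = -y := by
  have h : (⟨m, by omega⟩ : Fin (m + 1)) = Fin.last m := rfl
  simp only [shiftOrbit]
  rw [shiftOrbit_single_of_le c y m le_rfl, dif_pos (Nat.lt_succ_self m), h, Pi.single_eq_same]
  simp

/-- Elimination: the system `(c + Λ) u = f` is equivalent to the recursion for the coordinates of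
`u` together with a single equation for `u 0`. -/
lemma apply_eq_iff_shiftOrbit {m : ℕ} (A : X →L[ℂ] X)
    (Λ : (Fin (m + 1) → X) →L[ℂ] (Fin (m + 1) → X))
    (hΛ : ∀ (u : Fin (m + 1) → X) (i : Fin (m + 1)), Λ u i =
      if h : (i : ℕ) + 1 < m + 1 then -u ⟨(i : ℕ) + 1, h⟩ else A (u 0))
    (c : ℂ) (u f : Fin (m + 1) → X) :
    c • u + Λ u = f ↔
      (∀ i : Fin (m + 1), u i = shiftOrbit c f (u 0) i) ∧
        c ^ (m + 1) • u 0 + A (u 0) = -shiftOrbit c f 0 (m + 1) := by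
  have hlast : (c ^ (m + 1) • u 0 + A (u 0) = -shiftOrbit c f 0 (m + 1)) ↔
      c • shiftOrbit c f (u 0) m + A (u 0) = f (Fin.last m) := by
    have h1 := shiftOrbit_eq c f (u 0) (m + 1)
    have h2 : shiftOrbit c f (u 0) (m + 1) =
        c • shiftOrbit c f (u 0) m - f (Fin.last m) := by
      rw [shiftOrbit, dif_pos (Nat.lt_succ_self m)]
      rfl
    rw [h2] at h1
    rw [← sub_eq_zero, ← sub_eq_zero (b := f _)]
    have : c ^ (m + 1) • u 0 + A (u 0) - -shiftOrbit c f 0 (m + 1) =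
        c • shiftOrbit c f (u 0) m + A (u 0) - f (Fin.last m) := by
      rw [add_sub_right_comm, add_sub_right_comm, h1, sub_neg_eq_add]
    rw [this]
  rw [hlast]
  constructor
  · intro h
    have hi : ∀ i, c • u i + Λ u i = f i := fun i => congrFun h i
    have hs : ∀ k (hk : k < m + 1), u ⟨k, hk⟩ = shiftOrbit c f (u 0) k := by
      intro k
      induction k with
      | zero => intro _; rfl
      | succ k ih =>
        intro hk
        have h1 := hi ⟨k, by omega⟩
        rw [hΛ, dif_pos hk, ih (by omega)] at h1
        rw [shiftOrbit, dif_pos (by omega), ← h1]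
        abel
    refine ⟨fun i => hs i i.2, ?_⟩
    have h1 := hi (Fin.last m)
    rw [hΛ, dif_neg (by simp)] at h1
    rw [← hs m (by omega)]
    exact h1
  · rintro ⟨hs, hl⟩
    ext i
    change c • u i + Λ u i = f i
    rw [hΛ]
    split_ifs with h
    · rw [hs ⟨i + 1, h⟩, hs i]
      simp only [shiftOrbit]
      rw [dif_pos i.2]
      abel
    · have : i = Fin.last m := by
        apply Fin.ext
        simp
        omega
      subst this
      rw [hs (Fin.last m)]
      exact hl

lemma bijective_iff_pow {m : ℕ} (A : X →L[ℂ] X)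
    (Λ : (Fin (m + 1) → X) →L[ℂ] (Fin (m + 1) → X))
    (hΛ : ∀ (u : Fin (m + 1) → X) (i : Fin (m + 1)), Λ u i =
      if h : (i : ℕ) + 1 < m + 1 then -u ⟨(i : ℕ) + 1, h⟩ else A (u 0))
    (c : ℂ) :
    Function.Bijective (algebraMap ℂ ((Fin (m + 1) → X) →L[ℂ] (Fin (m + 1) → X)) c - -Λ) ↔
      Function.Bijective (algebraMap ℂ (X →L[ℂ] X) (c ^ (m + 1)) - -A) := by
  have hT : ∀ u, (algebraMap ℂ ((Fin (m + 1) → X) →L[ℂ] (Fin (m + 1) → X)) c - -Λ) u =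
      c • u + Λ u := fun u => by simp [Algebra.algebraMap_eq_smul_one]
  have hB : ∀ x, (algebraMap ℂ (X →L[ℂ] X) (c ^ (m + 1)) - -A) x =
      c ^ (m + 1) • x + A x := fun x => by simp [Algebra.algebraMap_eq_smul_one]
  have key := apply_eq_iff_shiftOrbit A Λ hΛ c
  constructor
  · rintro ⟨hinj, hsurj⟩
    refine ⟨(injective_iff_map_eq_zero _).2 fun x hx => ?_, fun y => ?_⟩
    · rw [hB] at hx
      -- a kernel vector `x` gives the kernel vector `(x, c x, c² x, …)`
      have h0 := (injective_iff_map_eq_zero _).1 hinj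
        (fun i => shiftOrbit c (0 : Fin (m + 1) → X) x i) (by
          rw [hT, key]
          refine ⟨fun i => rfl, ?_⟩
          rw [shiftOrbit_zero_zero, neg_zero]
          exact hx)
      exact congrFun h0 0
    · obtain ⟨u, hu⟩ := hsurj (Pi.single (Fin.last m) y)
      rw [hT, key, shiftOrbit_single_last, neg_neg] at hu
      exact ⟨u 0, (hB _).trans hu.2⟩
  · rintro ⟨hinj, hsurj⟩
    refine ⟨(injective_iff_map_eq_zero _).2 fun u hu => ?_, fun f => ?_⟩
    · rw [hT, key, shiftOrbit_zero_zero, neg_zero] at hu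
      have h0 : u 0 = 0 := (injective_iff_map_eq_zero _).1 hinj _ ((hB _).trans hu.2)
      ext i
      rw [hu.1 i, h0, shiftOrbit_zero_zero]
      rfl
    · obtain ⟨x, hx⟩ := hsurj (-shiftOrbit c f 0 (m + 1))
      rw [hB] at hx
      refine ⟨fun i => shiftOrbit c f x i, ?_⟩
      rw [hT, key]
      exact ⟨fun i => rfl, hx⟩

end

/-- Let `X` be a nontrivial complex Banach space, `A : X → X` a bounded linear
operator, `n ≥ 2`, and `Λ` the bounded operator on `Xⁿ` with
`(Λu)_i = −u_{i+1}` for `0 ≤ i ≤ n−2` and `(Λu)_{n−1} = A u_0`. Then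
`σ(−Λ) = { λ : λ^n ∈ σ(−A) }`. -/
theorem spectrum_neg_Lam (X : Type*) [NormedAddCommGroup X] [NormedSpace ℂ X]
    [CompleteSpace X] [Nontrivial X]
    (A : X →L[ℂ] X) (n : ℕ) (hn : 2 ≤ n)
    (Λ : (Fin n → X) →L[ℂ] (Fin n → X))
    (hΛ : ∀ (u : Fin n → X) (i : Fin n), Λ u i =
      if h : (i : ℕ) + 1 < n then -u ⟨(i : ℕ) + 1, h⟩ else A (u ⟨0, by omega⟩)) :
    spectrum ℂ (-Λ) = {lam : ℂ | lam ^ n ∈ spectrum ℂ (-A)} := by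
  obtain ⟨m, rfl⟩ : ∃ m, n = m + 1 := ⟨n - 1, by omega⟩
  ext c
  rw [Set.mem_ofPred_eq, spectrum.mem_iff, spectrum.mem_iff,
    ContinuousLinearMap.isUnit_iff_bijective, ContinuousLinearMap.isUnit_iff_bijective,
    bijective_iff_pow A Λ hΛ c]
end

section
/- Let X be a complex vector space, A a linear endomorphism of X, n ≥ 2 an integer, and Λ the linear endomorphism of Xⁿ (functions Fin n → X) defined by (Λu)_i = −u_{i+1} for 0 ≤ i ≤ n−2 and (Λu)_{n−1} = A u_0. Then for every λ ∈ ℂ, λ is an eigenvalue of −Λ if and only if λ^n is an eigenvalue of −A. -/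
/-!
The equation `-Λ u = λ u` says that `u_{i+1} = λ u_i` for all `i < n - 1` and that
`-A u_0 = λ u_{n-1}`. The first part holds exactly when `u_i = λ ^ i u_0` for every `i`; the second
then reads `-A u_0 = λ ^ n u_0`. So `u ↦ u_0` and `x ↦ (λ ^ i x)_i` are mutually inverse
correspondences between the `λ`-eigenvectors of `-Λ` and the `λ ^ n`-eigenvectors of `-A`.
-/

/-- Let `X` be a complex vector space, `A` a linear endomorphism of `X`, `n ≥ 2`,
and `Λ` the linear endomorphism of `Xⁿ` with `(Λu)_i = −u_{i+1}` for
`0 ≤ i ≤ n−2` and `(Λu)_{n−1} = A u_0`. Then for every `λ ∈ ℂ`, `λ` is an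
eigenvalue of `−Λ` iff `λ^n` is an eigenvalue of `−A`. -/
theorem hasEigenvalue_neg_Lam_iff (X : Type*) [AddCommGroup X] [Module ℂ X]
    (A : X →ₗ[ℂ] X) (n : ℕ) (hn : 2 ≤ n)
    (Λ : (Fin n → X) →ₗ[ℂ] (Fin n → X))
    (hΛ : ∀ (u : Fin n → X) (i : Fin n), Λ u i =
      if h : (i : ℕ) + 1 < n then -u ⟨(i : ℕ) + 1, h⟩ else A (u ⟨0, by omega⟩))
    (lam : ℂ) :
    Module.End.HasEigenvalue (-Λ) lam ↔ Module.End.HasEigenvalue (-A) (lam ^ n) := by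
  constructor
  · intro h
    obtain ⟨u, hu⟩ := h.exists_hasEigenvector
    have hcoord : ∀ i : Fin n, -(Λ u i) = lam • u i := fun i => congrFun hu.apply_eq_smul i
    have hpow : ∀ (k : ℕ) (hk : k < n), u ⟨k, hk⟩ = lam ^ k • u ⟨0, by omega⟩ := by
      intro k
      induction k with
      | zero => intro hk; simp
      | succ k ih =>
        intro hk
        have h1 := hcoord ⟨k, by omega⟩
        rw [hΛ, dif_pos hk, neg_neg, ih (by omega), smul_smul, ← pow_succ'] at h1
        exact h1
    refine Module.End.hasEigenvalue_of_hasEigenvector (x := u ⟨0, by omega⟩)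
      (Module.End.hasEigenvector_iff.2 ⟨Module.End.mem_eigenspace_iff.2 ?_, fun h0 => ?_⟩)
    · have h1 := hcoord ⟨n - 1, by omega⟩
      rw [hΛ, dif_neg (by simp only; omega), hpow (n - 1) (by omega), smul_smul, ← pow_succ',
        show lam ^ (n - 1 + 1) = lam ^ n by rw [Nat.sub_add_cancel (by omega)]] at h1
      exact h1
    · refine hu.2 (funext fun i => ?_)
      rw [show u i = _ from hpow i i.2, h0, smul_zero, Pi.zero_apply]
  · intro h
    obtain ⟨x, hx⟩ := h.exists_hasEigenvector
    have hAx : -(A x) = lam ^ n • x := hx.apply_eq_smul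
    refine Module.End.hasEigenvalue_of_hasEigenvector (x := fun i : Fin n => lam ^ (i : ℕ) • x)
      (Module.End.hasEigenvector_iff.2 ⟨Module.End.mem_eigenspace_iff.2 (funext fun i => ?_),
        fun h0 => hx.2 ?_⟩)
    · rw [LinearMap.neg_apply, Pi.neg_apply, Pi.smul_apply, hΛ, smul_smul, ← pow_succ']
      split_ifs with hi
      · rw [neg_neg]
      · rw [pow_zero, one_smul, hAx, show (i : ℕ) + 1 = n by omega]
    · simpa using congrFun h0 ⟨0, by omega⟩
end

section
/- Let X be a complex vector space, A a linear endomorphism of X, n ≥ 3 an integer, and Λ the linear endomorphism of Xⁿ (functions Fin n → X) defined by (Λu)_i = −u_{i+1} for 0 ≤ i ≤ n−2 and (Λu)_{n−1} = A u_0. Suppose there is a sequence (μ_j) of positive real numbers with μ_j → +∞ such that each μ_j (viewed as a complex number) is an eigenvalue of A. Then for every ω ∈ ℝ there exists ν ∈ ℂ with Re ν > ω such that ν is an eigenvalue of −Λ. In particular, the point spectrum of −Λ meets every right half-plane. -/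
/-!
A vector `u` is an eigenvector of `-Λ` for `ν` exactly when `u_{i+1} = ν u_i` and `-A u_0 = ν u_{n-1}`,
that is, `u_i = ν ^ i x` with `A x = -ν ^ n x`. So every `n`-th root `ν` of `-μ_j` is an eigenvalue of
`-Λ`. The root `ν = μ_j ^ (1/n) * exp (iπ/n)` has real part `μ_j ^ (1/n) * cos (π/n)`, and
`cos (π/n) ≥ cos (π/3) = 1/2` because `n ≥ 3`; this is unbounded as `μ_j → ∞`.
-/

/-- Let `X` be a complex vector space, `A` a linear endomorphism of `X`, `n ≥ 3`,
and `Λ` the linear endomorphism of `Xⁿ` with `(Λu)_i = −u_{i+1}` for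
`0 ≤ i ≤ n−2` and `(Λu)_{n−1} = A u_0`. If there is a sequence `(μ_j)` of
positive reals tending to `+∞` with each `μ_j` an eigenvalue of `A`, then for
every `ω ∈ ℝ` there exists an eigenvalue `ν` of `−Λ` with `Re ν > ω`. -/
theorem neg_Lam_eigenvalue_in_every_right_half_plane
    (X : Type*) [AddCommGroup X] [Module ℂ X]
    (A : X →ₗ[ℂ] X) (n : ℕ) (hn : 3 ≤ n)
    (Λ : (Fin n → X) →ₗ[ℂ] (Fin n → X))
    (hΛ : ∀ (u : Fin n → X) (i : Fin n), Λ u i =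
      if h : (i : ℕ) + 1 < n then -u ⟨(i : ℕ) + 1, h⟩ else A (u ⟨0, by omega⟩))
    (μ : ℕ → ℝ) (hμpos : ∀ j, 0 < μ j)
    (hμtop : Filter.Tendsto μ Filter.atTop Filter.atTop)
    (hμeig : ∀ j, Module.End.HasEigenvalue A ((μ j : ℂ))) :
    ∀ ω : ℝ, ∃ ν : ℂ, ω < ν.re ∧ Module.End.HasEigenvalue (-Λ) ν := by
  intro ω
  obtain ⟨j, hj⟩ := (hμtop.eventually_gt_atTop ((2 * |ω|) ^ n)).exists
  have hn0 : n ≠ 0 := by omega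
  have hnR : (3 : ℝ) ≤ n := by exact_mod_cast hn
  set s : ℝ := μ j ^ ((n : ℝ)⁻¹)
  have hs0 : 0 ≤ s := Real.rpow_nonneg (hμpos j).le _
  have hsn : s ^ n = μ j := Real.rpow_inv_natCast_pow (hμpos j).le hn0
  have hs : 2 * |ω| < s := lt_of_pow_lt_pow_left₀ n hs0 (by rw [hsn]; exact hj)
  have hcos : 1 / 2 ≤ Real.cos (Real.pi / n) := by
    rw [← Real.cos_pi_div_three]
    apply Real.cos_le_cos_of_nonneg_of_le_pi (by positivity)
    · linarith [Real.pi_pos]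
    · gcongr
  set ν : ℂ := (s : ℂ) * Complex.exp ((Real.pi / n : ℝ) * Complex.I)
  have hνn : ν ^ n = -(μ j : ℂ) := by
    have h : ((n : ℕ) : ℂ) * (((Real.pi / n : ℝ) : ℂ) * Complex.I) = Real.pi * Complex.I := by
      have : (n : ℂ) ≠ 0 := by exact_mod_cast hn0
      push_cast
      field_simp
    rw [mul_pow, ← Complex.exp_nat_mul, h, Complex.exp_pi_mul_I, ← hsn]
    push_cast
    ring
  refine ⟨ν, ?_, ?_⟩
  · rw [Complex.re_ofReal_mul, Complex.exp_ofReal_mul_I_re]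
    nlinarith [le_abs_self ω]
  · obtain ⟨x, hx⟩ := (hμeig j).exists_hasEigenvector
    refine Module.End.hasEigenvalue_of_hasEigenvector
      (x := fun i : Fin n => ν ^ (i : ℕ) • x) ⟨?_, ?_⟩
    · rw [Module.End.mem_eigenspace_iff]
      funext i
      rw [LinearMap.neg_apply, Pi.neg_apply, hΛ, Pi.smul_apply, smul_smul, ← pow_succ']
      split_ifs with h
      · rw [neg_neg]
      · have hi : (i : ℕ) + 1 = n := by omega
        rw [hi, hνn, pow_zero, one_smul, hx.apply_eq_smul, neg_smul]
    · intro h0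
      apply hx.2
      simpa using congrFun h0 ⟨0, by omega⟩
end

section
/- For every integer n ≥ 2 and every real a > 0, the matrix Bₙ(a,1) equals Λₙ(a) (with real entries); that is, for all indices 0 ≤ i,j ≤ n−1, ((−1)^{i−j}/n)·U_{n−1}(cos((1+i−j)π/n))·a^{(1+i−j)/n} equals −1 if j = i+1, equals a if (i,j) = (n−1,0), and equals 0 otherwise. -/
/-!
With `m = 1 + i - j`, the `(i, j)` entry of `Bₙ(a,1)` involves `U_{n-1}(cos (mπ/n))`, where
`2 - n ≤ m ≤ n`. Since `U_{n-1}(cos θ) sin θ = sin (nθ)`, this value vanishes whenever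
`sin (mπ/n) ≠ 0`, i.e. for `0 < |m| < n` (`U_eval_cos_eq_zero`). The two remaining values are
`m = 0` (the superdiagonal), where `U_{n-1}(1) = n`, and `m = n` (the bottom-left corner), where
`U_{n-1}(-1) = (-1)^{n-1} n`.
-/

/-- The real companion-type matrix `Λₙ(a)`: entries `-1` on the superdiagonal,
`a` in the bottom-left corner, `0` elsewhere. -/
def LamMatR (n : ℕ) (a : ℝ) : Matrix (Fin n) (Fin n) ℝ :=
  Matrix.of fun i j =>
    if (j : ℕ) = (i : ℕ) + 1 then -1
    else if (i : ℕ) = n - 1 ∧ (j : ℕ) = 0 then a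
    else 0

/-- The Chebyshev matrix `Bₙ(a,α)` with entries
`((−1)^{i−j}/n)·U_{n−1}(cos((α+i−j)π/n))·a^{(α+i−j)/n}`, where `U_{n−1}` is the
Chebyshev polynomial of the second kind and `a^x` is the real power. -/
noncomputable def Bmat (n : ℕ) (a α : ℝ) : Matrix (Fin n) (Fin n) ℝ :=
  Matrix.of fun i j =>
    ((-1 : ℝ) ^ ((i : ℤ) - (j : ℤ)) / n) *
      (Polynomial.Chebyshev.U ℝ ((n : ℤ) - 1)).eval
        (Real.cos ((α + (((i : ℤ) - (j : ℤ) : ℤ) : ℝ)) * Real.pi / n)) *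
      a ^ ((α + (((i : ℤ) - (j : ℤ) : ℤ) : ℝ)) / n)

theorem U_eval_cos_eq_zero (n : ℕ) (m : ℤ) (hm0 : m ≠ 0) (hlt : |m| < n) :
    (Polynomial.Chebyshev.U ℝ ((n : ℤ) - 1)).eval (Real.cos ((m : ℝ) * Real.pi / n)) = 0 := by
  have hnZ : (0 : ℤ) < n := (abs_nonneg m).trans_lt hlt
  have hn : (n : ℝ) ≠ 0 := by exact_mod_cast hnZ.ne'
  have hsin : Real.sin ((m : ℝ) * Real.pi / n) ≠ 0 := by
    intro h
    obtain ⟨k, hk⟩ := Real.sin_eq_zero_iff.mp h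
    have hkm : (k : ℝ) * n = m := by
      field_simp at hk
      linarith
    have hdvd : (n : ℤ) ∣ m := ⟨k, by rw [mul_comm]; exact_mod_cast hkm.symm⟩
    exact hm0 (Int.eq_zero_of_abs_lt_dvd hdvd hlt)
  have key := Polynomial.Chebyshev.U_real_cos ((m : ℝ) * Real.pi / n) ((n : ℤ) - 1)
  have hang : ((((n : ℤ) - 1 : ℤ) : ℝ) + 1) * ((m : ℝ) * Real.pi / n) = m * Real.pi := by
    push_cast
    field_simp
    ring
  rw [hang, Real.sin_int_mul_pi] at key
  exact (mul_eq_zero.mp key).resolve_right hsin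

/-- For every `n ≥ 2` and every real `a > 0`, the matrix `Bₙ(a,1)` equals `Λₙ(a)`. -/
theorem Bmat_one (n : ℕ) (hn : 2 ≤ n) (a : ℝ) (ha : 0 < a) :
    Bmat n a 1 = LamMatR n a := by
  have hn0 : (n : ℝ) ≠ 0 := by
    have : n ≠ 0 := by omega
    exact_mod_cast this
  ext i j
  have hi := i.isLt
  have hj := j.isLt
  simp only [Bmat, LamMatR, Matrix.of_apply]
  split_ifs with h1 h2
  · have hd : (i : ℤ) - (j : ℤ) = -1 := by omega
    rw [hd]
    simp [Polynomial.Chebyshev.U_eval_one, hn0]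
  · have hd : (i : ℤ) - (j : ℤ) = ((n - 1 : ℕ) : ℤ) := by omega
    have hs : (1 : ℝ) + ((((n - 1 : ℕ) : ℤ)) : ℝ) = n := by
      rw [Int.cast_natCast, Nat.cast_sub (by omega)]
      simp
    have hN : (n : ℤ) - 1 = ((n - 1 : ℕ) : ℤ) := by omega
    -- The sign `(-1)^{n-1}` from `U_{n-1}(-1)` cancels the prefactor `(-1)^{i-j}`.
    have hsq : ((-1 : ℝ) ^ (n - 1)) * (-1) ^ (n - 1) = 1 := by
      rw [← mul_pow]
      simp
    rw [hd, hs, mul_div_cancel_left₀ _ hn0, Real.cos_pi, div_self hn0, Real.rpow_one,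
      Polynomial.Chebyshev.U_eval_neg_one, hN, add_comm, hs, Int.negOnePow_def]
    simp only [zpow_natCast]
    push_cast
    field_simp
    linear_combination hsq
  · have hz := U_eval_cos_eq_zero n (1 + ((i : ℤ) - (j : ℤ))) (by omega)
      (abs_lt.mpr ⟨by omega, by omega⟩)
    rw [Int.cast_add, Int.cast_one] at hz
    rw [hz]
    ring
end

section
/- Let n ≥ 2 be an integer, a > 0 real, 0 < α < 1, and m an integer with 0 ≤ m ≤ n−1. Then (sin(απ)/π) · ∫₀^∞ λ^{α+m−1}·a/(λ^n + a) dλ = ((−1)^m/n)·U_{n−1}(cos((α+m)π/n))·a^{(α+m)/n}. -/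
/-!
The substitution `y = t ^ n`, followed by `y = a * x`, turns the integral into
`a ^ s / n` times `∫ x in (0, ∞), x ^ (s - 1) / (x + 1)` with `s = (α + m) / n ∈ (0, 1)`. The latter
is `Β(s, 1 - s)` after the substitution `x = u / (1 - u)`, hence equals `π / sin (π s)` by
Euler's reflection formula. On the other side `U_{n-1}(cos θ) sin θ = sin (n θ)` at `θ = π s` gives
`U_{n-1}(cos (π s)) = (-1) ^ m sin (α π) / sin (π s)`.
-/

open MeasureTheory

/-- The Beta function at `(s, 1 - s)`, evaluated by Euler's reflection formula. -/
lemma integral_beta_reflection (s : ℝ) (hs : 0 < s) (hs1 : s < 1) :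
    ∫ u in Set.Ioo (0 : ℝ) 1, u ^ (s - 1) * (1 - u) ^ (-s) = Real.pi / Real.sin (Real.pi * s) := by
  have h := Complex.betaIntegral_eq_Gamma_mul_div (s : ℂ) ((1 - s : ℝ) : ℂ)
    (by simpa using hs) (by simpa using hs1)
  rw [Complex.Gamma_ofReal, Complex.Gamma_ofReal, ← Complex.ofReal_add,
    add_sub_cancel, Complex.Gamma_ofReal, Real.Gamma_one, Complex.ofReal_one, div_one,
    ← Complex.ofReal_mul, Real.Gamma_mul_Gamma_one_sub, Complex.betaIntegral,
    intervalIntegral.integral_of_le zero_le_one, integral_Ioc_eq_integral_Ioo] at h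
  apply Complex.ofReal_injective
  rw [← h, ← integral_complex_ofReal]
  refine setIntegral_congr_fun measurableSet_Ioo fun u hu => ?_
  have h1 : (0 : ℝ) ≤ 1 - u := by linarith [hu.2]
  simp only [Complex.ofReal_mul, Complex.ofReal_cpow hu.1.le, Complex.ofReal_cpow h1]
  push_cast
  congr 2
  ring

lemma image_div_one_sub : (fun u : ℝ => u / (1 - u)) '' Set.Ioo 0 1 = Set.Ioi 0 := by
  ext x
  simp only [Set.mem_image, Set.mem_Ioo, Set.mem_Ioi]
  constructor
  · rintro ⟨u, ⟨h0, h1⟩, rfl⟩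
    exact div_pos h0 (by linarith)
  · intro hx
    refine ⟨x / (1 + x), ⟨by positivity, by rw [div_lt_one (by positivity)]; linarith⟩, ?_⟩
    have : 1 + x ≠ 0 := by positivity
    field_simp
    ring

lemma integral_rpow_div_add_one (s : ℝ) (hs : 0 < s) (hs1 : s < 1) :
    ∫ x in Set.Ioi (0 : ℝ), x ^ (s - 1) / (x + 1) = Real.pi / Real.sin (Real.pi * s) := by
  rw [← integral_beta_reflection s hs hs1, ← image_div_one_sub,
    integral_image_eq_integral_abs_deriv_smul (f' := fun u => 1 / (1 - u) ^ 2) measurableSet_Ioo]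
  · refine setIntegral_congr_fun measurableSet_Ioo fun u hu => ?_
    have h1 : (0 : ℝ) < 1 - u := by linarith [hu.2]
    have e : (1 - u) ^ (s - 1) = (1 - u) ^ s / (1 - u) := by rw [Real.rpow_sub h1, Real.rpow_one]
    have e' : u / (1 - u) + 1 = 1 / (1 - u) := by field_simp; ring
    have hp := (Real.rpow_pos_of_pos h1 s).ne'
    simp only [smul_eq_mul]
    rw [abs_of_pos (by positivity), Real.div_rpow hu.1.le h1.le, e, e', Real.rpow_neg h1.le]
    field_simp
  · intro u hu
    have h1 : (1 - u : ℝ) ≠ 0 := by linarith [hu.2]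
    refine (((hasDerivAt_id u).div ((hasDerivAt_id u).const_sub 1) h1).congr_deriv
      ?_).hasDerivWithinAt
    simp
  · intro u hu v hv huv
    have h1 : (1 - u : ℝ) ≠ 0 := by linarith [hu.2]
    have h2 : (1 - v : ℝ) ≠ 0 := by linarith [hv.2]
    have := (div_eq_div_iff h1 h2).1 huv
    linarith

lemma integral_rpow_mul_div_add (s a : ℝ) (hs : 0 < s) (hs1 : s < 1) (ha : 0 < a) :
    ∫ y in Set.Ioi (0 : ℝ), y ^ (s - 1) * a / (y + a) =
      a ^ s * (Real.pi / Real.sin (Real.pi * s)) := by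
  have h := integral_comp_mul_left_Ioi' (fun y : ℝ => y ^ (s - 1) * a / (y + a)) 0 ha
  rw [mul_zero] at h
  rw [← h, ← integral_rpow_div_add_one s hs hs1, smul_eq_mul, ← integral_const_mul,
    ← integral_const_mul]
  refine setIntegral_congr_fun measurableSet_Ioi fun x hx => ?_
  have hx : (0 : ℝ) < x := hx
  rw [Real.mul_rpow ha.le hx.le, Real.rpow_sub ha, Real.rpow_one]
  field_simp

lemma integral_rpow_mul_div_pow_add (n : ℕ) (hn : 0 < n) (s a : ℝ) (hs : 0 < s) (hs1 : s < 1)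
    (ha : 0 < a) :
    ∫ t in Set.Ioi (0 : ℝ), t ^ (n * s - 1) * a / (t ^ n + a) =
      a ^ s * (Real.pi / Real.sin (Real.pi * s)) / n := by
  have hn' : (0 : ℝ) < n := by exact_mod_cast hn
  rw [← integral_rpow_mul_div_add s a hs hs1 ha,
    ← integral_comp_rpow_Ioi_of_pos (g := fun y : ℝ => y ^ (s - 1) * a / (y + a)) hn',
    eq_div_iff hn'.ne', ← integral_mul_const]
  refine setIntegral_congr_fun measurableSet_Ioi fun t ht => ?_
  have ht : (0 : ℝ) < t := ht
  have e : t ^ ((n : ℝ) * s - 1) = t ^ ((n : ℝ) - 1) * t ^ ((n : ℝ) * (s - 1)) := by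
    rw [← Real.rpow_add ht]
    ring_nf
  simp only [smul_eq_mul]
  rw [← Real.rpow_mul ht.le, Real.rpow_natCast, e]
  ring

/-- Scalar entrywise Balakrishnan computation (row−column difference `m ≥ 0`):
for `n ≥ 2`, `a > 0`, `0 < α < 1` and `0 ≤ m ≤ n−1`,
`(sin(απ)/π)·∫₀^∞ λ^{α+m−1}·a/(λ^n+a) dλ
  = ((−1)^m/n)·U_{n−1}(cos((α+m)π/n))·a^{(α+m)/n}`. -/
theorem balakrishnan_entry_lower (n : ℕ) (hn : 2 ≤ n) (a : ℝ) (ha : 0 < a)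
    (α : ℝ) (hα : 0 < α) (hα1 : α < 1) (m : ℕ) (hm : m ≤ n - 1) :
    Real.sin (α * Real.pi) / Real.pi *
        ∫ t in Set.Ioi (0 : ℝ), t ^ (α + m - 1) * a / (t ^ n + a) =
      ((-1 : ℝ) ^ m / n) *
        (Polynomial.Chebyshev.U ℝ ((n : ℤ) - 1)).eval
          (Real.cos ((α + m) * Real.pi / n)) *
        a ^ ((α + m) / n) := by
  have hn' : (0 : ℝ) < n := by exact_mod_cast (by omega : 0 < n)
  have hm' : (m : ℝ) + 1 ≤ n := by exact_mod_cast (by omega : m + 1 ≤ n)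
  have hm0 : (0 : ℝ) ≤ m := m.cast_nonneg
  obtain ⟨s, hs⟩ : ∃ s : ℝ, s = (α + m) / n := ⟨_, rfl⟩
  have hns : α + m = n * s := by rw [hs]; field_simp
  have hs0 : 0 < s := by rw [hs]; positivity
  have hs1 : s < 1 := by rw [hs, div_lt_one hn']; linarith
  have hθ : (α + m) * Real.pi / n = Real.pi * s := by rw [hs]; ring
  have hsin : 0 < Real.sin (Real.pi * s) :=
    Real.sin_pos_of_pos_of_lt_pi (by positivity) (by nlinarith [Real.pi_pos])
  have hU := Polynomial.Chebyshev.U_real_cos (Real.pi * s) ((n : ℤ) - 1)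
  have harg : (((n : ℤ) - 1 : ℤ) + 1 : ℝ) * (Real.pi * s) = α * Real.pi + m * Real.pi := by
    push_cast
    linear_combination (-Real.pi) * hns
  rw [harg, Real.sin_add_nat_mul_pi, ← eq_div_iff hsin.ne'] at hU
  have hsq : ((-1 : ℝ) ^ m) * (-1) ^ m = 1 := by rw [← mul_pow]; simp
  rw [hθ, hU, ← hs, hns, integral_rpow_mul_div_pow_add n (by omega) s a hs0 hs1 ha]
  have hpi := Real.pi_ne_zero
  field_simp
  linear_combination (-Real.sin (α * Real.pi)) * hsq
end

section
/- Let n ≥ 2 be an integer, a > 0 real, 0 < α < 1, and m an integer with 1 ≤ m ≤ n−1. Then (sin(απ)/π) · ∫₀^∞ λ^{α+n−m−1}/(λ^n + a) dλ = ((−1)^{m+1}/n)·U_{n−1}(cos((α−m)π/n))·a^{(α−m)/n}. -/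
/-!
Put `s = 1 + (α - m) / n`, which lies in `(0, 1)`. The substitution `y = t ^ n` turns the integral
into `(1 / n) ∫ y ^ (s - 1) / (y + a)`. Writing `1 / (y + a) = ∫ exp (-x (y + a)) dx` and exchanging
the integrals gives `Γ(s) Γ(1 - s) a ^ (s - 1)`, which the reflection formula evaluates as
`π / sin (π s) * a ^ (s - 1)`. With `θ = (α - m) π / n` one has `sin (π s) = -sin θ`, while
`U_{n-1}(cos θ) sin θ = sin (n θ) = (-1) ^ m sin (α π)`; since `-π < θ < 0`, `sin θ ≠ 0`, and
dividing by it yields the claim.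
-/

open MeasureTheory

/-- The Mellin transform of `1 / (y + a)`: Euler's reflection integral, obtained from
`1 / (y + a) = ∫ exp (-x (y + a)) dx` by Fubini. -/
theorem integral_rpow_div_add (s a : ℝ) (hs : 0 < s) (hs1 : s < 1) (ha : 0 < a) :
    ∫ y in Set.Ioi (0 : ℝ), y ^ (s - 1) / (y + a) =
      Real.pi / Real.sin (Real.pi * s) * a ^ (s - 1) := by
  let F : ℝ → ℝ → ℝ := fun y x ↦ y ^ (s - 1) * Real.exp (-(x * (y + a)))
  have hF1 : ∀ y ∈ Set.Ioi (0 : ℝ), ∫ x in Set.Ioi (0 : ℝ), F y x = y ^ (s - 1) / (y + a) := by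
    intro y hy
    have hya : 0 < y + a := add_pos hy ha
    have h := Real.integral_rpow_mul_exp_neg_mul_Ioi one_pos hya
    simp only [sub_self, Real.rpow_zero, one_mul, Real.rpow_one, Real.Gamma_one, mul_one] at h
    simp only [F]
    rw [integral_const_mul]
    simp only [mul_comm _ (y + a)]
    rw [h, mul_one_div]
  have hF : ∀ x y, F y x = Real.exp (-(a * x)) * (y ^ (s - 1) * Real.exp (-(x * y))) := by
    intro x y
    simp only [F]
    rw [mul_left_comm, ← Real.exp_add]
    ring_nf
  have hF2 : ∀ x ∈ Set.Ioi (0 : ℝ), ∫ y in Set.Ioi (0 : ℝ), F y x =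
      Real.Gamma s * (x ^ ((1 - s) - 1) * Real.exp (-(a * x))) := by
    intro x hx
    simp only [hF]
    rw [integral_const_mul, Real.integral_rpow_mul_exp_neg_mul_Ioi hs hx, one_div,
      Real.inv_rpow (le_of_lt hx), ← Real.rpow_neg (le_of_lt hx), sub_sub_cancel_left]
    ring
  have hg := Real.integral_rpow_mul_exp_neg_mul_Ioi (sub_pos.2 hs1) ha
  have hG1 := Real.Gamma_pos_of_pos (sub_pos.2 hs1)
  have hG := Real.Gamma_pos_of_pos hs
  have hint : Integrable (Function.uncurry F)
      ((volume.restrict (Set.Ioi (0 : ℝ))).prod (volume.restrict (Set.Ioi (0 : ℝ)))) := by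
    have hm : Measurable (Function.uncurry F) := by
      simp only [F, Function.uncurry_def]
      fun_prop
    rw [integrable_prod_iff' hm.aestronglyMeasurable]
    constructor
    · refine (ae_restrict_iff' measurableSet_Ioi).2 (ae_of_all _ fun x hx ↦ ?_)
      -- A non-integrable function would have integral `0`, but this one has positive integral.
      refine .of_integral_ne_zero ?_
      simp only [Function.uncurry_apply_pair]
      rw [hF2 x hx]
      have : 0 < x := hx
      positivity
    · have h1 : IntegrableOn (fun x : ℝ ↦ Real.Gamma s * (x ^ ((1 - s) - 1) * Real.exp (-(a * x))))
          (Set.Ioi 0) := by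
        refine Integrable.const_mul (.of_integral_ne_zero ?_) _
        rw [hg]
        positivity
      refine h1.congr_fun (fun x hx ↦ ?_) measurableSet_Ioi
      refine (hF2 x hx).symm.trans ?_
      refine setIntegral_congr_fun measurableSet_Ioi fun y hy ↦ ?_
      have : 0 < y := hy
      have : 0 ≤ F y x := by simp only [F]; positivity
      simp [abs_of_nonneg this]
  rw [← setIntegral_congr_fun measurableSet_Ioi hF1, integral_integral_swap hint,
    setIntegral_congr_fun measurableSet_Ioi hF2, integral_const_mul, hg,
    ← Real.Gamma_mul_Gamma_one_sub, one_div, Real.inv_rpow ha.le, ← Real.rpow_neg ha.le, neg_sub]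
  ring


/-- Scalar entrywise Balakrishnan computation (column−row difference `m ≥ 1`):
for `n ≥ 2`, `a > 0`, `0 < α < 1` and `1 ≤ m ≤ n−1`,
`(sin(απ)/π)·∫₀^∞ λ^{α+n−m−1}/(λ^n+a) dλ
  = ((−1)^{m+1}/n)·U_{n−1}(cos((α−m)π/n))·a^{(α−m)/n}`. -/
theorem balakrishnan_entry_upper (n : ℕ) (hn : 2 ≤ n) (a : ℝ) (ha : 0 < a)
    (α : ℝ) (hα : 0 < α) (hα1 : α < 1) (m : ℕ) (hm1 : 1 ≤ m) (hm : m ≤ n - 1) :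
    Real.sin (α * Real.pi) / Real.pi *
        ∫ t in Set.Ioi (0 : ℝ), t ^ (α + n - m - 1) / (t ^ n + a) =
      ((-1 : ℝ) ^ (m + 1) / n) *
        (Polynomial.Chebyshev.U ℝ ((n : ℤ) - 1)).eval
          (Real.cos ((α - m) * Real.pi / n)) *
        a ^ ((α - m) / n) := by
  have hn0 : (0 : ℝ) < n := by exact_mod_cast (by omega : 0 < n)
  have hmn : (m : ℝ) + 1 ≤ n := by exact_mod_cast (by omega : m + 1 ≤ n)
  have hm1' : (1 : ℝ) ≤ m := by exact_mod_cast hm1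
  obtain ⟨s, hs⟩ : ∃ s, s = 1 + (α - m) / n := ⟨_, rfl⟩
  have hns : n * (s - 1) = α - m := by rw [hs]; field_simp; ring
  have hs0 : 0 < s := by nlinarith
  have hs1 : s < 1 := by nlinarith
  have hI : ∫ t in Set.Ioi (0 : ℝ), t ^ (α + n - m - 1) / (t ^ n + a) =
      1 / n * (Real.pi / Real.sin (Real.pi * s) * a ^ (s - 1)) := by
    rw [← integral_rpow_div_add s a hs0 hs1 ha, ← integral_comp_rpow_Ioi_of_pos (g := fun y ↦ y ^ (s - 1) / (y + a)) hn0,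
      ← integral_const_mul]
    refine setIntegral_congr_fun measurableSet_Ioi fun t ht ↦ ?_
    have ht : 0 < t := ht
    simp only [smul_eq_mul]
    rw [← Real.rpow_mul ht.le, hns, Real.rpow_natCast,
      show α + n - m - 1 = (n - 1 : ℝ) + (α - m) by ring, Real.rpow_add ht]
    field_simp
  obtain ⟨θ, hθ⟩ : ∃ θ, θ = (α - m) * Real.pi / n := ⟨_, rfl⟩
  have hθs : Real.pi * s = θ + Real.pi := by rw [hs, hθ]; ring
  have hsin : Real.sin (Real.pi * s) = -Real.sin θ := by rw [hθs, Real.sin_add_pi]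
  have hpos : 0 < Real.sin (Real.pi * s) :=
    Real.sin_pos_of_pos_of_lt_pi (by positivity) (by nlinarith [Real.pi_pos])
  have hne : Real.sin θ ≠ 0 := by
    intro h
    rw [hsin, h] at hpos
    simp at hpos
  have hU := Polynomial.Chebyshev.U_real_cos θ ((n : ℤ) - 1)
  have hnθ : (((n : ℤ) - 1 : ℤ) + 1 : ℝ) * θ = α * Real.pi - m * Real.pi := by
    rw [hθ]; push_cast; field_simp; ring
  rw [hnθ, Real.sin_sub_nat_mul_pi] at hU
  have hsq : (-1 : ℝ) ^ m * (-1) ^ m = 1 := by rw [← mul_pow]; simp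
  rw [hI, ← hθ, hsin, eq_div_of_mul_eq hne hU, show s - 1 = (α - m) / n by rw [hs]; ring, pow_succ]
  have := Real.pi_ne_zero
  field_simp
  linear_combination (Real.sin (α * Real.pi)) * hsq
end

section
/- Let n ≥ 2 be an integer, a > 0 real and 0 < α < 1. Then for all indices 0 ≤ i,j ≤ n−1, (sin(απ)/π) · ∫₀^∞ λ^{α−1} · (Λₙ(a)·(λ·I + Λₙ(a))⁻¹)_{i,j} dλ = Bₙ(a,α)_{i,j}; that is, the Balakrishnan integral (sin(απ)/π)∫₀^∞ λ^{α−1} Λₙ(a)(λI+Λₙ(a))⁻¹ dλ, computed entrywise, equals the Chebyshev matrix Bₙ(a,α). -/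
/-!
The bottom-left entry `a` and the superdiagonal `-1` make `-Λ` a weighted cyclic shift with
`(-Λ)^n = -a`, so the geometric series truncates:
`(λ + Λ)⁻¹ = (λ^n + a)⁻¹ ∑_{k<n} λ^(n-1-k) (-Λ)^k` (`lamRes`, `inv_add_lamMatR`).
Hence, with `d = i - j`, the entries of `Λ (λ + Λ)⁻¹` are `a λ^d / (λ^n + a)` for `d ≥ 0` and
`-λ^(n+d) / (λ^n + a)` for `d < 0` (`lamMatR_mul_lamRes`).

Each entry of the Balakrishnan integral is therefore an instance of
`∫₀^∞ t^(s-1) / (t^n + a) dt = a^(s/n-1) π / (n sin(π s/n))` for `0 < s < n`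
(`integral_rpow_div_pow_add`), which the substitution `x = t^n / (t^n + a)` turns into the Beta
integral `B(s/n, 1 - s/n) = π / sin(π s/n)`. Since `n θ = (α + d) π` for `θ = (α + d) π / n`, the
identity `U_{n-1}(cos θ) sin θ = sin (n θ) = (-1)^d sin (α π)` gives the Chebyshev form.
-/

open MeasureTheory

/-- The Beta integral with parameters `u` and `1 - u`, by Euler's reflection formula. -/
lemma integral_rpow_mul_one_sub_rpow {u : ℝ} (h0 : 0 < u) (h1 : u < 1) :
    ∫ x in Set.Ioo (0 : ℝ) 1, x ^ (u - 1) * (1 - x) ^ (-u) =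
      Real.pi / Real.sin (Real.pi * u) := by
  have hB := Complex.betaIntegral_eq_Gamma_mul_div (u : ℂ) ((1 - u : ℝ) : ℂ)
    (by simpa using h0) (by rw [Complex.ofReal_re]; linarith)
  rw [← Complex.ofReal_add, Complex.Gamma_ofReal, Complex.Gamma_ofReal, Complex.Gamma_ofReal,
    add_sub_cancel, Real.Gamma_one, Complex.ofReal_one, div_one, ← Complex.ofReal_mul,
    Real.Gamma_mul_Gamma_one_sub, Complex.betaIntegral,
    intervalIntegral.integral_of_le zero_le_one, integral_Ioc_eq_integral_Ioo] at hB
  apply Complex.ofReal_injective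
  rw [← hB, ← integral_complex_ofReal]
  refine setIntegral_congr_fun measurableSet_Ioo fun x hx => ?_
  have hx1 : 0 ≤ 1 - x := by linarith [hx.2]
  rw [Complex.ofReal_mul, Complex.ofReal_cpow hx.1.le, Complex.ofReal_cpow hx1]
  push_cast
  congr 2
  ring

lemma integral_rpow_div_pow_add {n : ℕ} (hn : 0 < n) {a s : ℝ} (ha : 0 < a) (hs : 0 < s)
    (hsn : s < n) :
    ∫ t in Set.Ioi (0 : ℝ), t ^ (s - 1) / (t ^ n + a) =
      a ^ (s / n - 1) * (Real.pi / (n * Real.sin (Real.pi * (s / n)))) := by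
  have hn' : (0 : ℝ) < n := by exact_mod_cast hn
  set u : ℝ := s / n with hu
  have hun : u * n = s := by rw [hu]; field_simp
  have h0 : 0 < u := by positivity
  have h1 : u < 1 := by rw [hu, div_lt_one hn']; exact hsn
  have hpos : ∀ t ∈ Set.Ioi (0 : ℝ), 0 < t ^ n + a := fun t ht => by
    have : 0 < t ^ n := pow_pos ht n
    linarith
  have hd : ∀ t ∈ Set.Ioi (0 : ℝ), HasDerivWithinAt (fun t : ℝ => t ^ n / (t ^ n + a))
      (n * a * t ^ (n - 1) / (t ^ n + a) ^ 2) (Set.Ioi 0) t := fun t ht => by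
    have h := (hasDerivAt_pow n t).div ((hasDerivAt_pow n t).add_const a) (hpos t ht).ne'
    refine (h.congr_deriv ?_).hasDerivWithinAt
    ring
  have hinj : Set.InjOn (fun t : ℝ => t ^ n / (t ^ n + a)) (Set.Ioi 0) := fun x hx y hy h => by
    have hx' := hpos x hx
    have hy' := hpos y hy
    simp only at h
    rw [div_eq_div_iff hx'.ne' hy'.ne'] at h
    have h2 : a * x ^ n = a * y ^ n := by linarith
    exact (pow_left_inj₀ (le_of_lt hx) (le_of_lt hy) hn.ne').1 (mul_left_cancel₀ ha.ne' h2)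
  have himg : (fun t : ℝ => t ^ n / (t ^ n + a)) '' Set.Ioi 0 = Set.Ioo 0 1 := by
    ext x
    constructor
    · rintro ⟨t, ht, rfl⟩
      have hp : 0 < t ^ n := pow_pos ht n
      exact ⟨div_pos hp (hpos t ht), by rw [div_lt_one (hpos t ht)]; linarith⟩
    · rintro ⟨hx0, hx1⟩
      have hx1' : 0 < 1 - x := by linarith
      have hq : 0 < a * x / (1 - x) := by positivity
      refine ⟨(a * x / (1 - x)) ^ ((n : ℝ)⁻¹), Real.rpow_pos_of_pos hq _, ?_⟩
      simp only [Real.rpow_inv_natCast_pow hq.le hn.ne']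
      field_simp
      ring
  have key := integral_image_eq_integral_abs_deriv_smul measurableSet_Ioi hd hinj
    (fun x => x ^ (u - 1) * (1 - x) ^ (-u))
  rw [himg, integral_rpow_mul_one_sub_rpow h0 h1] at key
  have hint : ∀ t ∈ Set.Ioi (0 : ℝ), |n * a * t ^ (n - 1) / (t ^ n + a) ^ 2| •
      ((t ^ n / (t ^ n + a)) ^ (u - 1) * (1 - t ^ n / (t ^ n + a)) ^ (-u)) =
      (n * a ^ (1 - u)) * (t ^ (s - 1) / (t ^ n + a)) := fun t ht => by
    have hp := hpos t ht
    have ht0 : 0 < t := ht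
    have h1x : 1 - t ^ n / (t ^ n + a) = a / (t ^ n + a) := by field_simp; ring
    rw [abs_of_nonneg (by positivity), smul_eq_mul, h1x, Real.div_rpow (by positivity) hp.le,
      Real.div_rpow ha.le hp.le, ← Real.rpow_natCast t n, ← Real.rpow_mul ht0.le]
    rw [Real.rpow_natCast]
    have e1 : (t ^ n + a) ^ (u - 1) = (t ^ n + a) ^ u / (t ^ n + a) := by
      rw [Real.rpow_sub hp, Real.rpow_one]
    have e2 : (t ^ n + a) ^ (-u) = ((t ^ n + a) ^ u)⁻¹ := Real.rpow_neg hp.le _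
    have e3 : a ^ (1 - u) = a * a ^ (-u) := by
      rw [sub_eq_add_neg, Real.rpow_add ha, Real.rpow_one]
    have e4 : t ^ (s - 1) = t ^ (n - 1) * t ^ ((n : ℝ) * (u - 1)) := by
      rw [← Real.rpow_natCast t (n - 1), ← Real.rpow_add ht0, Nat.cast_sub hn]
      congr 1
      push_cast
      linarith
    have : 0 < (t ^ n + a) ^ u := Real.rpow_pos_of_pos hp _
    rw [e1, e2, e3, e4]
    field_simp
  rw [setIntegral_congr_fun measurableSet_Ioi hint, integral_const_mul] at key
  have e5 : a ^ (u - 1) = (a ^ (1 - u))⁻¹ := by rw [← Real.rpow_neg ha.le, neg_sub]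
  have : 0 < a ^ (1 - u) := Real.rpow_pos_of_pos ha _
  rw [e5, ← div_div, div_right_comm, key]
  field_simp

/-- The resolvent `(t + Λ)⁻¹ = (t^n + a)⁻¹ ∑_{k<n} t^(n-1-k) (-Λ)^k`, entry by entry. -/
noncomputable def lamRes (n : ℕ) (a t : ℝ) : Matrix (Fin n) (Fin n) ℝ :=
  Matrix.of fun i j =>
    if (i : ℕ) ≤ j then t ^ (n - 1 - ((j : ℕ) - i)) / (t ^ n + a)
    else -(a * t ^ ((i : ℕ) - j - 1)) / (t ^ n + a)

lemma lamMatR_mul_apply {n : ℕ} (a : ℝ) (M : Matrix (Fin n) (Fin n) ℝ) (i j : Fin n) :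
    (LamMatR n a * M) i j =
      if h : (i : ℕ) + 1 < n then -M ⟨i + 1, h⟩ j else a * M ⟨0, i.pos⟩ j := by
  rw [Matrix.mul_apply]
  split_ifs with h
  · rw [Finset.sum_eq_single ⟨i + 1, h⟩]
    · simp [LamMatR]
    · intro k _ hk
      have hk' : (k : ℕ) ≠ i + 1 := fun e => hk (Fin.ext e)
      have hi : (i : ℕ) ≠ n - 1 := by omega
      simp [LamMatR, hk', hi]
    · simp
  · have hi : (i : ℕ) = n - 1 := by omega
    rw [Finset.sum_eq_single ⟨0, i.pos⟩]
    · simp [LamMatR, hi]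
    · intro k _ hk
      have hk' : (k : ℕ) ≠ 0 := fun e => hk (Fin.ext e)
      have hk2 : (k : ℕ) ≠ i + 1 := by omega
      simp [LamMatR, hk', hk2]
    · simp

lemma lamMatR_mul_lamRes {n : ℕ} (a t : ℝ) (i j : Fin n) :
    (LamMatR n a * lamRes n a t) i j =
      if (j : ℕ) ≤ i then a * t ^ ((i : ℕ) - j) / (t ^ n + a)
      else -t ^ (n - ((j : ℕ) - i)) / (t ^ n + a) := by
  have hi := i.isLt
  have hj := j.isLt
  rw [lamMatR_mul_apply]
  by_cases h : (i : ℕ) + 1 < n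
  · by_cases hij : (j : ℕ) ≤ i
    · have e : (i : ℕ) + 1 - j - 1 = i - j := by omega
      have h' : ¬ (i : ℕ) + 1 ≤ j := by omega
      simp only [lamRes, Matrix.of_apply, dif_pos h, if_neg h', if_pos hij, e]
      ring
    · have e : n - 1 - ((j : ℕ) - (i + 1)) = n - (j - i) := by omega
      have h' : (i : ℕ) + 1 ≤ j := by omega
      simp only [lamRes, Matrix.of_apply, dif_pos h, if_pos h', if_neg hij, e]
      ring
  · have hij : (j : ℕ) ≤ i := by omega
    have e : n - 1 - (j : ℕ) = i - j := by omega
    simp only [lamRes, Matrix.of_apply, dif_neg h, if_pos hij, zero_le, if_true, Nat.sub_zero, e]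
    ring

lemma inv_add_lamMatR {n : ℕ} {a t : ℝ} (ha : 0 < a) (ht : 0 < t) :
    (t • (1 : Matrix (Fin n) (Fin n) ℝ) + LamMatR n a)⁻¹ = lamRes n a t := by
  apply Matrix.inv_eq_right_inv
  have hp : t ^ n + a ≠ 0 := by positivity
  ext i j
  have hi := i.isLt
  have hj := j.isLt
  rw [Matrix.add_mul, Matrix.smul_mul, one_mul, Matrix.add_apply, Matrix.smul_apply, smul_eq_mul,
    lamMatR_mul_lamRes]
  simp only [lamRes, Matrix.of_apply]
  rcases lt_trichotomy (i : ℕ) j with h | h | h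
  · have e : n - ((j : ℕ) - i) = n - 1 - (j - i) + 1 := by omega
    rw [if_pos h.le, if_neg (not_le.2 h), Matrix.one_apply_ne (Fin.ne_of_lt h), e]
    ring
  · have hij : i = j := Fin.ext h
    subst hij
    have e : t ^ n = t ^ (n - 1) * t := by rw [← pow_succ]; congr 1; omega
    rw [if_pos le_rfl, if_pos le_rfl, Matrix.one_apply_eq, Nat.sub_self, Nat.sub_zero]
    rw [e] at hp ⊢
    field_simp
  · have e : (i : ℕ) - j = i - j - 1 + 1 := by omega
    rw [if_neg (not_le.2 h), if_pos h.le, Matrix.one_apply_ne (Fin.ne_of_gt h), e,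
      Nat.add_sub_cancel]
    ring

/-- `U_{n-1}(cos θ) = (-1)^d sin (α π) / sin θ` at `θ = (α + d) π / n`. -/
lemma eval_U_cos {n : ℕ} (hn : 0 < n) (α : ℝ) (d : ℤ)
    (hs : Real.sin ((α + d) * Real.pi / n) ≠ 0) :
    (Polynomial.Chebyshev.U ℝ ((n : ℤ) - 1)).eval (Real.cos ((α + d) * Real.pi / n)) =
      (-1) ^ d * Real.sin (α * Real.pi) / Real.sin ((α + d) * Real.pi / n) := by
  have hn' : (n : ℝ) ≠ 0 := by exact_mod_cast hn.ne'
  have h := Polynomial.Chebyshev.U_real_cos ((α + d) * Real.pi / n) ((n : ℤ) - 1)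
  have e : (((((n : ℤ) - 1 : ℤ) : ℝ)) + 1) * ((α + d) * Real.pi / n) =
      α * Real.pi + d * Real.pi := by
    push_cast
    field_simp
    ring
  rw [e, Real.sin_add_int_mul_pi] at h
  rw [eq_div_iff hs, h]

/-- Entrywise Balakrishnan formula: for `n ≥ 2`, `a > 0`, `0 < α < 1` and all
indices `i, j`,
`(sin(απ)/π)·∫₀^∞ λ^{α−1}·(Λₙ(a)(λI+Λₙ(a))⁻¹)_{i,j} dλ = Bₙ(a,α)_{i,j}`. -/
theorem balakrishnan_matrix (n : ℕ) (hn : 2 ≤ n) (a : ℝ) (ha : 0 < a)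
    (α : ℝ) (hα : 0 < α) (hα1 : α < 1) (i j : Fin n) :
    Real.sin (α * Real.pi) / Real.pi *
        ∫ t in Set.Ioi (0 : ℝ), t ^ (α - 1) *
          ((LamMatR n a *
            (t • (1 : Matrix (Fin n) (Fin n) ℝ) + LamMatR n a)⁻¹) i j) =
      Bmat n a α i j := by
  have hn0 : 0 < n := by omega
  have hn' : (0 : ℝ) < n := by exact_mod_cast hn0
  have hi := i.isLt
  have hj := j.isLt
  have hpi := Real.pi_pos
  set d : ℤ := (i : ℤ) - (j : ℤ) with hd
  have hsq : ((-1 : ℝ) ^ d) * (-1) ^ d = 1 := by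
    rw [← mul_zpow]; simp
  have hentry : ∀ t ∈ Set.Ioi (0 : ℝ), t ^ (α - 1) *
      ((LamMatR n a * (t • (1 : Matrix (Fin n) (Fin n) ℝ) + LamMatR n a)⁻¹) i j) =
      t ^ (α - 1) * (if (j : ℕ) ≤ i then a * t ^ ((i : ℕ) - j) / (t ^ n + a)
        else -t ^ (n - ((j : ℕ) - i)) / (t ^ n + a)) := fun t ht => by
    rw [inv_add_lamMatR ha ht, lamMatR_mul_lamRes]
  rw [setIntegral_congr_fun measurableSet_Ioi hentry]
  simp only [Bmat, Matrix.of_apply, ← hd]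
  -- Both signs of `d` reduce to the scalar integral with exponent `s = α + m`, where `m = d` or
  -- `m = n + d`, and `0 < s < n`.
  have hpow : ∀ (m : ℕ) (t : ℝ), 0 < t → t ^ (α - 1) * t ^ m = t ^ (α + m - 1) := by
    intro m t ht
    rw [← Real.rpow_natCast t m, ← Real.rpow_add ht]
    congr 1
    ring
  have hI : ∀ m : ℕ, m < n → 0 < Real.sin (Real.pi * ((α + m) / n)) ∧
      ∫ t in Set.Ioi (0 : ℝ), t ^ (α + m - 1) / (t ^ n + a) =
      a ^ ((α + m) / n - 1) * (Real.pi / (n * Real.sin (Real.pi * ((α + m) / n)))) := by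
    intro m hm
    have hm' : (m : ℝ) + 1 ≤ n := by exact_mod_cast hm
    have h0 : 0 < α + m := by positivity
    have h1 : α + m < n := by linarith
    refine ⟨Real.sin_pos_of_pos_of_lt_pi (by positivity) ?_,
      integral_rpow_div_pow_add hn0 ha h0 h1⟩
    have : (α + m) / n < 1 := by rwa [div_lt_one hn']
    nlinarith
  by_cases hij : (j : ℕ) ≤ i
  · obtain ⟨hsin, hint⟩ := hI ((i : ℕ) - j) (by omega)
    have hdm : (((i : ℕ) - j : ℕ) : ℝ) = (d : ℝ) := by
      rw [hd, Nat.cast_sub hij]; push_cast; ring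
    have harg : Real.pi * ((α + d) / n) = (α + d) * Real.pi / n := by ring
    rw [hdm, harg] at hsin hint
    have hcongr : ∀ t ∈ Set.Ioi (0 : ℝ), t ^ (α - 1) * (if (j : ℕ) ≤ i then
        a * t ^ ((i : ℕ) - j) / (t ^ n + a) else -t ^ (n - ((j : ℕ) - i)) / (t ^ n + a)) =
        a * (t ^ (α + d - 1) / (t ^ n + a)) := fun t ht => by
      rw [if_pos hij, ← hdm, ← hpow _ t ht]
      ring
    rw [setIntegral_congr_fun measurableSet_Ioi hcongr, integral_const_mul, hint,
      eval_U_cos hn0 α d hsin.ne', Real.rpow_sub_one ha.ne']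
    generalize Real.sin ((α + d) * Real.pi / n) = S at hsin ⊢
    generalize (-1 : ℝ) ^ d = σ at hsq ⊢
    have hS : S ≠ 0 := hsin.ne'
    field_simp
    linear_combination (-Real.sin (α * Real.pi)) * hsq
  · obtain ⟨hsin, hint⟩ := hI (n - ((j : ℕ) - i)) (by omega)
    have hdm : ((n - ((j : ℕ) - i) : ℕ) : ℝ) = n + (d : ℝ) := by
      rw [hd, Nat.cast_sub (by omega), Nat.cast_sub (by omega)]; push_cast; ring
    have harg : Real.pi * ((α + (n + d)) / n) = (α + d) * Real.pi / n + Real.pi := by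
      field_simp
      ring
    have hexp : (α + (n + d)) / n - 1 = (α + d) / (n : ℝ) := by
      field_simp
      ring
    rw [hdm, harg, Real.sin_add_pi] at hsin hint
    rw [hexp] at hint
    have hsin' : Real.sin ((α + d) * Real.pi / n) ≠ 0 := by
      intro h
      rw [h] at hsin
      simp at hsin
    have hcongr : ∀ t ∈ Set.Ioi (0 : ℝ), t ^ (α - 1) * (if (j : ℕ) ≤ i then
        a * t ^ ((i : ℕ) - j) / (t ^ n + a) else -t ^ (n - ((j : ℕ) - i)) / (t ^ n + a)) =
        (-1) * (t ^ (α + (n + d) - 1) / (t ^ n + a)) := fun t ht => by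
      rw [if_neg hij, ← hdm, ← hpow _ t ht]
      ring
    rw [setIntegral_congr_fun measurableSet_Ioi hcongr, integral_const_mul, hint,
      eval_U_cos hn0 α d hsin']
    generalize Real.sin ((α + d) * Real.pi / n) = S at hsin' ⊢
    generalize (-1 : ℝ) ^ d = σ at hsq ⊢
    have hS : S ≠ 0 := hsin'
    field_simp
    linear_combination (-Real.sin (α * Real.pi)) * hsq
end

section
/- Let n ≥ 2 be an integer, a > 0 real, and α, β ∈ [0,1] with α + β ≤ 1. Then Bₙ(a,α)·Bₙ(a,β) = Bₙ(a,α+β). In particular the matrices Bₙ(a,α) satisfy the semigroup law of fractional powers of Λₙ(a). -/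
open Finset in
theorem U_cos_eq_sum (θ : ℂ) (n : ℕ) :
    (Polynomial.Chebyshev.U ℂ ((n : ℤ) - 1)).eval (Complex.cos θ) =
      ∑ k ∈ range n, Complex.exp (((n : ℂ) - 1 - 2 * k) * θ * Complex.I) := by
  set S : ℕ → ℂ := fun n => ∑ k ∈ range n, Complex.exp (((n : ℂ) - 1 - 2 * k) * θ * Complex.I)
    with hS
  -- Splitting off the first or the last exponential gives two one-step recurrences for `S`;
  -- together they yield the Chebyshev recurrence.
  have first (n : ℕ) : S (n + 1) =
      Complex.exp (n * θ * Complex.I) + Complex.exp (-θ * Complex.I) * S n := by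
    simp only [hS]
    rw [sum_range_succ', mul_sum, add_comm]
    congr 1
    · congr 1; push_cast; ring
    · refine sum_congr rfl fun k _ => ?_
      rw [← Complex.exp_add]; congr 1; push_cast; ring
  have last (n : ℕ) : S (n + 1) =
      Complex.exp (-(n * θ * Complex.I)) + Complex.exp (θ * Complex.I) * S n := by
    simp only [hS]
    rw [sum_range_succ, mul_sum, add_comm]
    congr 1
    · congr 1; push_cast; ring
    · refine sum_congr rfl fun k _ => ?_
      rw [← Complex.exp_add]; congr 1; push_cast; ring
  have step (n : ℕ) : S (n + 2) = 2 * Complex.cos θ * S (n + 1) - S n := by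
    have h1 := last (n + 1)
    have h2 := last n
    have h3 : Complex.exp (-θ * Complex.I) * Complex.exp (θ * Complex.I) = 1 := by
      rw [← Complex.exp_add]; simp
    have h4 : Complex.exp (-(((n + 1 : ℕ) : ℂ) * θ * Complex.I)) =
        Complex.exp (-θ * Complex.I) * Complex.exp (-(n * θ * Complex.I)) := by
      rw [← Complex.exp_add]; congr 1; push_cast; ring
    rw [Complex.two_cos]
    linear_combination h1 + h4 - Complex.exp (-θ * Complex.I) * h2 - S n * h3
  change _ = S n
  induction n using Nat.twoStepInduction with
  | zero => simp [hS]
  | one => simp [hS]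
  | more n ih0 ih1 =>
    rw [step, ← ih0, ← ih1]
    have := Polynomial.Chebyshev.U_add_two ℂ ((n : ℤ) - 1)
    rw [show (((n + 2 : ℕ) : ℤ) - 1) = (n : ℤ) - 1 + 2 by push_cast; ring,
      show (((n + 1 : ℕ) : ℤ) - 1) = (n : ℤ) - 1 + 1 by push_cast; ring, this]
    simp

/-- The `k`-th of the `n`-th roots of `-1`, namely `e^{iπ(2k+1)/n}`. -/
noncomputable def negRoot (n k : ℕ) : ℂ :=
  Complex.exp ((2 * k + 1) * Real.pi / n * Complex.I)

/-- The `k`-th eigenvalue `e^{iπ(n-1-2k)α/n}` of `Bₙ(1,α)`. -/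
noncomputable def eigenval (n : ℕ) (α : ℝ) (k : ℕ) : ℂ :=
  Complex.exp ((n - 1 - 2 * k) * (α * Real.pi / n) * Complex.I)

theorem eigenval_add (n : ℕ) (α β : ℝ) (k : ℕ) :
    eigenval n (α + β) k = eigenval n α k * eigenval n β k := by
  simp only [eigenval]
  rw [← Complex.exp_add]; congr 1; push_cast; ring

theorem negRoot_ne_zero (n k : ℕ) : negRoot n k ≠ 0 := Complex.exp_ne_zero _

theorem negRoot_pow {n : ℕ} (hn : n ≠ 0) (k : ℕ) : negRoot n k ^ n = -1 := by
  have hn' : (n : ℂ) ≠ 0 := by exact_mod_cast hn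
  rw [negRoot, ← Complex.exp_nat_mul,
    show (n : ℂ) * ((2 * k + 1) * Real.pi / n * Complex.I) =
      Real.pi * Complex.I + k * (2 * Real.pi * Complex.I) by field_simp; ring,
    Complex.exp_add, Complex.exp_nat_mul_two_pi_mul_I, Complex.exp_pi_mul_I, mul_one]

theorem negRoot_injOn {n : ℕ} (hn : n ≠ 0) {k m : ℕ} (hk : k < n) (hm : m < n)
    (h : negRoot n k = negRoot n m) : k = m := by
  have key (k : ℕ) : negRoot n k =
      negRoot n 0 * Complex.exp (2 * Real.pi * Complex.I / n) ^ k := by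
    rw [negRoot, negRoot, ← Complex.exp_nat_mul, ← Complex.exp_add]
    congr 1; push_cast; ring
  rw [key k, key m] at h
  exact (Complex.isPrimitiveRoot_exp n hn).pow_inj hk hm
    (mul_left_cancel₀ (negRoot_ne_zero n 0) h)

/-- Orthogonality of the eigenvectors `(q_k^j)_j`, where `q_k` is `negRoot n k`. -/
theorem sum_negRoot_div_pow {n : ℕ} (hn : n ≠ 0) {k m : ℕ} (hk : k < n) (hm : m < n) :
    ∑ j ∈ Finset.range n, (negRoot n k / negRoot n m) ^ j = if k = m then (n : ℂ) else 0 := by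
  split_ifs with h
  · simp [h, div_self (negRoot_ne_zero n m)]
  · have hne : negRoot n k / negRoot n m ≠ 1 := fun h1 =>
      h (negRoot_injOn hn hk hm ((div_eq_one_iff_eq (negRoot_ne_zero n m)).1 h1))
    rw [geom_sum_eq hne, div_pow, negRoot_pow hn, negRoot_pow hn]
    simp

/-- Spectral form of the entries of `Bₙ(a,α)`. -/
theorem Bmat_apply_eq_sum {n : ℕ} (hn : n ≠ 0) (a α : ℝ) (i j : Fin n) :
    ((Bmat n a α i j : ℝ) : ℂ) =
      ((a ^ ((α + ((i : ℕ) : ℝ) - ((j : ℕ) : ℝ)) / n) : ℝ) : ℂ) / n *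
        ∑ k ∈ Finset.range n, eigenval n α k * (negRoot n k ^ (i : ℕ))⁻¹ *
          negRoot n k ^ (j : ℕ) := by
  have hn' : (n : ℂ) ≠ 0 := by exact_mod_cast hn
  have hsign : ((-1 : ℂ) ^ ((i : ℤ) - (j : ℤ))) =
      Complex.exp (-(((i : ℕ) : ℂ) - ((j : ℕ) : ℂ)) * Real.pi * Complex.I) := by
    -- `-1 = e^{-iπ}` is the choice of logarithm for which the exponents below match exactly.
    have h1 : (-1 : ℂ) = Complex.exp (-(Real.pi * Complex.I)) := by
      rw [Complex.exp_neg, Complex.exp_pi_mul_I]; norm_num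
    rw [h1, ← Complex.exp_int_mul]
    congr 1; push_cast; ring
  simp only [Bmat, Matrix.of_apply]
  push_cast
  rw [U_cos_eq_sum, hsign,
    show (α + (((i : ℕ) : ℝ) - ((j : ℕ) : ℝ))) = α + ((i : ℕ) : ℝ) - ((j : ℕ) : ℝ) by ring,
    Finset.mul_sum, Finset.mul_sum, Finset.sum_mul]
  refine Finset.sum_congr rfl fun k _ => ?_
  have hexp : Complex.exp (-(((i : ℕ) : ℂ) - ((j : ℕ) : ℂ)) * Real.pi * Complex.I) *
      Complex.exp (((n : ℂ) - 1 - 2 * k) *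
        ((α + (((i : ℕ) : ℂ) - ((j : ℕ) : ℂ))) * Real.pi / n) * Complex.I) =
      eigenval n α k * (negRoot n k ^ (i : ℕ))⁻¹ * negRoot n k ^ (j : ℕ) := by
    simp only [eigenval, negRoot]
    rw [← Complex.exp_nat_mul, ← Complex.exp_nat_mul, ← Complex.exp_neg, ← Complex.exp_add,
      ← Complex.exp_add, ← Complex.exp_add]
    congr 1
    field_simp
    ring
  rw [← hexp]
  ring

/-- Semigroup law of fractional powers: for `n ≥ 2`, `a > 0`, and
`α, β ∈ [0,1]` with `α + β ≤ 1`, one has `Bₙ(a,α)·Bₙ(a,β) = Bₙ(a,α+β)`. -/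
theorem Bmat_mul_Bmat (n : ℕ) (hn : 2 ≤ n) (a : ℝ) (ha : 0 < a)
    (α β : ℝ) (hα0 : 0 ≤ α) (hα1 : α ≤ 1) (hβ0 : 0 ≤ β) (hβ1 : β ≤ 1)
    (hαβ : α + β ≤ 1) :
    Bmat n a α * Bmat n a β = Bmat n a (α + β) := by
  have hn0 : n ≠ 0 := by omega
  have hn' : (n : ℂ) ≠ 0 := by exact_mod_cast hn0
  ext i l
  apply Complex.ofReal_injective
  rw [Matrix.mul_apply, Complex.ofReal_sum, Bmat_apply_eq_sum hn0]
  set A : ℂ := ((a ^ ((α + β + ((i : ℕ) : ℝ) - ((l : ℕ) : ℝ)) / n) : ℝ) : ℂ) with hA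
  have hterm (j : Fin n) : ((Bmat n a α i j * Bmat n a β j l : ℝ) : ℂ) =
      ∑ k ∈ Finset.range n, ∑ m ∈ Finset.range n,
        A / n ^ 2 * (eigenval n α k * eigenval n β m * (negRoot n k ^ (i : ℕ))⁻¹ *
          negRoot n m ^ (l : ℕ)) * (negRoot n k / negRoot n m) ^ (j : ℕ) := by
    have hpow : A = ((a ^ ((α + ((i : ℕ) : ℝ) - ((j : ℕ) : ℝ)) / n) : ℝ) : ℂ) *
        ((a ^ ((β + ((j : ℕ) : ℝ) - ((l : ℕ) : ℝ)) / n) : ℝ) : ℂ) := by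
      rw [hA, ← Complex.ofReal_mul, ← Real.rpow_add ha]
      congr 2; ring
    rw [Complex.ofReal_mul, Bmat_apply_eq_sum hn0, Bmat_apply_eq_sum hn0, mul_mul_mul_comm,
      Finset.sum_mul_sum, Finset.mul_sum]
    refine Finset.sum_congr rfl fun k _ => ?_
    rw [Finset.mul_sum]
    refine Finset.sum_congr rfl fun m _ => ?_
    rw [hpow, div_pow]
    ring
  simp only [hterm]
  rw [Fin.sum_univ_eq_sum_range (fun j => ∑ k ∈ Finset.range n, ∑ m ∈ Finset.range n,
        A / n ^ 2 * (eigenval n α k * eigenval n β m * (negRoot n k ^ (i : ℕ))⁻¹ *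
          negRoot n m ^ (l : ℕ)) * (negRoot n k / negRoot n m) ^ j), Finset.sum_comm,
    Finset.mul_sum]
  refine Finset.sum_congr rfl fun k hk => ?_
  rw [Finset.sum_comm]
  simp only [← Finset.mul_sum]
  -- Only the diagonal term `m = k` of the remaining double sum survives.
  rw [Finset.sum_congr rfl fun m hm => by
    rw [sum_negRoot_div_pow hn0 (Finset.mem_range.1 hk) (Finset.mem_range.1 hm)]]
  simp only [mul_ite, mul_zero, Finset.sum_ite_eq, hk, if_true]
  rw [eigenval_add]
  field_simp
end

section
/- For every integer n ≥ 2, every real a > 0, and every α ∈ [0,1], the determinant of the matrix Bₙ(a,α) equals a^α. -/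
/-- The Chebyshev polynomial `U_{n-1}` at `(u + v)/2` with `uv = 1` is the complete homogeneous
sum of degree `n - 1` in `u, v`. -/
lemma eval_U_eq_sum (u v : ℂ) (h : u * v = 1) (n : ℕ) :
    (Polynomial.Chebyshev.U ℂ ((n : ℤ) - 1)).eval ((u + v) / 2)
      = ∑ k ∈ Finset.range n, u ^ (n - 1 - k) * v ^ k := by
  have hS : ∀ m : ℕ, ∑ k ∈ Finset.range (m + 1), u ^ (m + 1 - 1 - k) * v ^ k
      = u * (∑ k ∈ Finset.range m, u ^ (m - 1 - k) * v ^ k) + v ^ m := by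
    intro m
    rw [Finset.sum_range_succ, Finset.mul_sum]
    congr 1
    · refine Finset.sum_congr rfl fun k hk => ?_
      have hk' := Finset.mem_range.mp hk
      rw [← mul_assoc, ← pow_succ']
      congr 2
      omega
    · simp
  induction n using Nat.twoStepInduction with
  | zero => simp
  | one => simp
  | more m ih0 ih1 =>
    have e : (((m + 2 : ℕ) : ℤ) - 1) = ((m : ℤ) - 1) + 2 := by push_cast; ring
    have e1 : (((m + 1 : ℕ) : ℤ) - 1) = ((m : ℤ) - 1) + 1 := by push_cast; ring
    rw [e1] at ih1
    rw [e, Polynomial.Chebyshev.U_add_two, hS (m + 1)]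
    simp only [Polynomial.eval_sub, Polynomial.eval_mul, Polynomial.eval_X,
      Polynomial.eval_ofNat, ih0, ih1]
    rw [hS m]
    linear_combination (∑ k ∈ Finset.range m, u ^ (m - 1 - k) * v ^ k) * h

/-- The eigenvector matrix `V i k = zₖ^i`, `zₖ = a^{1/n} e^{-iπ(2k+1)/n}`, with the power written
out through real powers and the exponential. -/
noncomputable def eigV (n : ℕ) (a : ℝ) : Matrix (Fin n) (Fin n) ℂ :=
  Matrix.of fun i k =>
    ((a ^ (((i : ℕ) : ℝ) / n) : ℝ) : ℂ) *
      Complex.exp (-(Real.pi * Complex.I * (2 * ((k : ℕ) : ℂ) + 1) * ((i : ℕ) : ℂ) / n))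

/-- The inverse of `eigV`: `W k j = zₖ^{-j} / n`. -/
noncomputable def eigW (n : ℕ) (a : ℝ) : Matrix (Fin n) (Fin n) ℂ :=
  Matrix.of fun k j =>
    ((a ^ (-(((j : ℕ) : ℝ) / n)) : ℝ) : ℂ) *
      Complex.exp (Real.pi * Complex.I * (2 * ((k : ℕ) : ℂ) + 1) * ((j : ℕ) : ℂ) / n) / n

/-- The `k`-th eigenvalue `e^{iπα} zₖ^α` of `Bₙ(a,α)`. -/
noncomputable def eigC (n : ℕ) (a α : ℝ) (k : Fin n) : ℂ :=
  ((a ^ (α / n) : ℝ) : ℂ) *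
    Complex.exp (Real.pi * Complex.I * α * (n - (2 * ((k : ℕ) : ℂ) + 1)) / n)

lemma eigW_mul_eigV (n : ℕ) (hn : 2 ≤ n) (a : ℝ) (ha : 0 < a) :
    eigW n a * eigV n a = 1 := by
  have hn0 : (n : ℂ) ≠ 0 := by
    have : n ≠ 0 := by omega
    exact_mod_cast this
  ext k l
  -- the ratio `z_l / z_k` is an `n`-th root of unity
  set q : ℂ := Complex.exp (2 * Real.pi * Complex.I * (((k : ℕ) : ℂ) - ((l : ℕ) : ℂ)) / n) with hq
  have hterm : ∀ j : Fin n, eigW n a k j * eigV n a j l = q ^ (j : ℕ) / n := by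
    intro j
    simp only [eigW, eigV, Matrix.of_apply]
    have h1 : ((a ^ (-(((j : ℕ) : ℝ) / n)) : ℝ) : ℂ) * ((a ^ (((j : ℕ) : ℝ) / n) : ℝ) : ℂ) = 1 := by
      rw [← Complex.ofReal_mul, ← Real.rpow_add ha]; simp
    have h2 : Complex.exp (Real.pi * Complex.I * (2 * ((k : ℕ) : ℂ) + 1) * ((j : ℕ) : ℂ) / n) *
        Complex.exp (-(Real.pi * Complex.I * (2 * ((l : ℕ) : ℂ) + 1) * ((j : ℕ) : ℂ) / n))
        = q ^ (j : ℕ) := by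
      rw [hq, ← Complex.exp_add, ← Complex.exp_nat_mul]
      congr 1
      ring
    rw [← h2]
    linear_combination (Complex.exp (Real.pi * Complex.I * (2 * ((k : ℕ) : ℂ) + 1) *
      ((j : ℕ) : ℂ) / n) * Complex.exp (-(Real.pi * Complex.I * (2 * ((l : ℕ) : ℂ) + 1) *
      ((j : ℕ) : ℂ) / n)) / n) * h1
  rw [Matrix.mul_apply, Finset.sum_congr rfl fun j _ => hterm j, ← Finset.sum_div,
    Fin.sum_univ_eq_sum_range (fun j => q ^ j)]
  by_cases hkl : k = l
  · subst hkl
    have : q = 1 := by simp [hq]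
    simp [this, hn0]
  · rw [Matrix.one_apply_ne hkl]
    have hqn : q ^ n = 1 := by
      rw [hq, ← Complex.exp_nat_mul, Complex.exp_eq_one_iff]
      refine ⟨((k : ℕ) : ℤ) - ((l : ℕ) : ℤ), ?_⟩
      push_cast
      field_simp
    have hq1 : q ≠ 1 := by
      intro h
      rw [hq, Complex.exp_eq_one_iff] at h
      obtain ⟨m, hm⟩ := h
      have h2 : (2 * Real.pi * Complex.I : ℂ) ≠ 0 := Complex.two_pi_I_ne_zero
      have h3 : ((k : ℕ) : ℂ) - ((l : ℕ) : ℂ) = m * n := by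
        rw [div_eq_iff hn0] at hm
        apply mul_left_cancel₀ h2
        linear_combination hm
      have h4 : ((k : ℕ) : ℤ) - ((l : ℕ) : ℤ) = m * n := by exact_mod_cast h3
      -- `|k - l| < n` forces the multiple of `n` to vanish
      have h5 : ((k : ℕ) : ℤ) - ((l : ℕ) : ℤ) = 0 := by
        refine Int.eq_zero_of_abs_lt_dvd (m := (n : ℤ)) ⟨m, by rw [h4]; ring⟩ ?_
        have := k.isLt
        have := l.isLt
        rw [abs_lt]
        constructor <;> omega
      exact hkl (Fin.ext (by omega))
    rw [geom_sum_eq hq1, hqn]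
    simp

lemma Bmat_map_eq (n : ℕ) (hn : 2 ≤ n) (a : ℝ) (ha : 0 < a) (α : ℝ) :
    (Bmat n a α).map Complex.ofReal = eigV n a * Matrix.diagonal (eigC n a α) * eigW n a := by
  have hn0 : (n : ℂ) ≠ 0 := by
    have : n ≠ 0 := by omega
    exact_mod_cast this
  ext i j
  rw [Matrix.mul_apply]
  simp only [Matrix.mul_diagonal]
  set d : ℤ := (i : ℤ) - (j : ℤ) with hd
  have hdc : (d : ℂ) = ((i : ℕ) : ℂ) - ((j : ℕ) : ℂ) := by rw [hd]; push_cast; rfl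
  have hdr : (d : ℝ) = ((i : ℕ) : ℝ) - ((j : ℕ) : ℝ) := by rw [hd]; push_cast; rfl
  set x : ℂ := (α + d) * Real.pi / n * Complex.I with hx
  have hU : (((Polynomial.Chebyshev.U ℝ ((n : ℤ) - 1)).eval
        (Real.cos ((α + (d : ℝ)) * Real.pi / n)) : ℝ) : ℂ)
      = ∑ k ∈ Finset.range n, Complex.exp x ^ (n - 1 - k) * Complex.exp (-x) ^ k := by
    rw [← eval_U_eq_sum _ _ (by rw [← Complex.exp_add]; simp),
      Polynomial.Chebyshev.complex_ofReal_eval_U]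
    congr 1
    rw [Complex.ofReal_cos, Complex.cos, hx]
    push_cast
    congr 3
    ring
  have hsign : ((-1 : ℂ)) ^ d = Complex.exp (-(Real.pi * Complex.I * d)) := by
    rw [← Complex.exp_pi_mul_I, ← Complex.exp_int_mul]
    rw [Complex.exp_eq_exp_iff_exists_int]
    exact ⟨d, by ring⟩
  have hpow : ∀ k : Fin n, eigV n a i k * eigC n a α k * eigW n a k j
      = (-1 : ℂ) ^ d / n * (Complex.exp x ^ (n - 1 - (k : ℕ)) * Complex.exp (-x) ^ (k : ℕ)) *
        ((a ^ ((α + (d : ℝ)) / n) : ℝ) : ℂ) := by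
    intro k
    have hk := k.isLt
    have hcast : ((n - 1 - (k : ℕ) : ℕ) : ℂ) = n - 1 - ((k : ℕ) : ℂ) := by
      rw [Nat.cast_sub (by omega), Nat.cast_sub (by omega)]; simp
    have hA : ((a ^ (((i : ℕ) : ℝ) / n) : ℝ) : ℂ) * ((a ^ (α / n) : ℝ) : ℂ) *
        ((a ^ (-(((j : ℕ) : ℝ) / n)) : ℝ) : ℂ) = ((a ^ ((α + (d : ℝ)) / n) : ℝ) : ℂ) := by
      rw [← Complex.ofReal_mul, ← Complex.ofReal_mul, ← Real.rpow_add ha, ← Real.rpow_add ha, hdr]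
      congr 2
      ring
    have hE : Complex.exp (-(Real.pi * Complex.I * (2 * ((k : ℕ) : ℂ) + 1) * ((i : ℕ) : ℂ) / n)) *
        Complex.exp (Real.pi * Complex.I * α * (n - (2 * ((k : ℕ) : ℂ) + 1)) / n) *
        Complex.exp (Real.pi * Complex.I * (2 * ((k : ℕ) : ℂ) + 1) * ((j : ℕ) : ℂ) / n)
        = (-1 : ℂ) ^ d *
          (Complex.exp x ^ (n - 1 - (k : ℕ)) * Complex.exp (-x) ^ (k : ℕ)) := by
      rw [hsign, ← Complex.exp_nat_mul, ← Complex.exp_nat_mul, ← Complex.exp_add,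
        ← Complex.exp_add, ← Complex.exp_add, ← Complex.exp_add, hcast, hx, hdc]
      congr 1
      field_simp
      ring
    simp only [eigV, eigC, eigW, Matrix.of_apply]
    rw [← hA]
    linear_combination (((a ^ (((i : ℕ) : ℝ) / n) : ℝ) : ℂ) * ((a ^ (α / n) : ℝ) : ℂ) *
        ((a ^ (-(((j : ℕ) : ℝ) / n)) : ℝ) : ℂ) / n) * hE
  rw [Finset.sum_congr rfl fun k _ => hpow k, ← Finset.sum_mul, ← Finset.mul_sum,
    Fin.sum_univ_eq_sum_range (fun k => Complex.exp x ^ (n - 1 - k) * Complex.exp (-x) ^ k), ← hU]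
  simp only [Bmat, Matrix.map_apply, Matrix.of_apply, ← hd]
  push_cast
  rfl

lemma prod_eigC (n : ℕ) (hn : 2 ≤ n) (a : ℝ) (ha : 0 < a) (α : ℝ) :
    ∏ k, eigC n a α k = ((a ^ α : ℝ) : ℂ) := by
  have hn' : (n : ℝ) ≠ 0 := by
    have : n ≠ 0 := by omega
    exact_mod_cast this
  have hsum : ∀ m : ℕ, ∑ k ∈ Finset.range m, (2 * (k : ℂ) + 1) = (m : ℂ) ^ 2 := by
    intro m
    induction m with
    | zero => simp
    | succ m ih => rw [Finset.sum_range_succ, ih]; push_cast; ring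
  simp only [eigC]
  rw [Finset.prod_mul_distrib, ← Complex.exp_sum, ← Finset.sum_div, ← Finset.mul_sum,
    Finset.sum_sub_distrib, Fin.sum_univ_eq_sum_range (fun k => (2 * (k : ℂ) + 1)), hsum]
  have h1 : (a ^ (α / n)) ^ n = a ^ α := by
    rw [← Real.rpow_natCast, ← Real.rpow_mul ha.le, div_mul_cancel₀ _ hn']
  simp [← h1, sq]

/-- For every `n ≥ 2`, `a > 0` and `α ∈ [0,1]`, `det Bₙ(a,α) = a^α`. -/
theorem det_Bmat (n : ℕ) (hn : 2 ≤ n) (a : ℝ) (ha : 0 < a)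
    (α : ℝ) (hα0 : 0 ≤ α) (hα1 : α ≤ 1) :
    (Bmat n a α).det = a ^ α := by
  apply Complex.ofReal_injective
  have h : (((Bmat n a α).det : ℝ) : ℂ) = ((Bmat n a α).map Complex.ofReal).det :=
    RingHom.map_det Complex.ofRealHom (Bmat n a α)
  have hdet : (eigW n a).det * (eigV n a).det = 1 := by
    rw [← Matrix.det_mul, eigW_mul_eigV n hn a ha, Matrix.det_one]
  rw [h, Bmat_map_eq n hn a ha α, Matrix.det_mul, Matrix.det_mul, Matrix.det_diagonal,
    prod_eigC n hn a ha α]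
  linear_combination ((a ^ α : ℝ) : ℂ) * hdet
end

section
/- Let n ≥ 2 be an integer, μ > 0 real, and 0 < α ≤ 1. Then the set { −z^α : z ∈ ℂ, z^n = (−1)^{n−1}·μ }, where z^α denotes the principal complex power exp(α·Log z), equals the union over k = 0, 1, …, ⌊(n−1)/2⌋ of the pairs { μ^{α/n}·exp(iπ(n−(n−2k−1)α)/n), μ^{α/n}·exp(iπ(n+(n−2k−1)α)/n) }. -/
/-!
Taking logarithms, the solutions of `z ^ n = (-1) ^ (n - 1) * μ` are exactly the numbers with
`Log z = (log μ + iπm) / n`, where `m` is an integer of the parity of `n - 1` and `|m| ≤ n - 1`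
(`root_iff`). The range of `m` comes from `-π < Im (Log z) ≤ π`, the parity excluding the endpoint
`m = n`. Hence `-z ^ α = μ ^ (α / n) * exp (iπ(n + mα) / n)` (`neg_exp_eq`). Writing
`|m| = n - 2k - 1` with `0 ≤ k ≤ (n - 1) / 2`, the two signs of `m` give the two members of the
`k`-th pair.
-/

open Complex

theorem neg_one_pow_mul_eq_exp (n : ℕ) (hn : 1 ≤ n) {μ : ℝ} (hμ : 0 < μ) :
    (-1 : ℂ) ^ (n - 1) * (μ : ℂ) =
      Complex.exp ((Real.log μ : ℝ) + Real.pi * Complex.I * ((n : ℂ) - 1)) := by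
  have h1 : ((n - 1 : ℕ) : ℂ) = (n : ℂ) - 1 := by push_cast [Nat.cast_sub hn]; ring
  rw [Complex.exp_add, ← Complex.ofReal_exp, Real.exp_log hμ, ← h1, mul_comm _ (((n - 1 : ℕ) : ℂ)),
    Complex.exp_nat_mul, Complex.exp_pi_mul_I, mul_comm]

/-- The `n`-th roots of `(-1) ^ (n - 1) * μ`, described through their principal logarithms. -/
theorem root_iff (n : ℕ) (hn : 2 ≤ n) {μ : ℝ} (hμ : 0 < μ) (z : ℂ) :
    z ^ n = (-1 : ℂ) ^ (n - 1) * (μ : ℂ) ↔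
      ∃ q : ℤ, 0 ≤ q ∧ q ≤ n - 1 ∧ z ≠ 0 ∧
        Complex.log z =
          ((Real.log μ : ℝ) + Real.pi * Complex.I * (((n : ℝ) - 2 * q - 1 : ℝ) : ℂ)) / n := by
  have hn0 : (n : ℂ) ≠ 0 := by exact_mod_cast (by omega : n ≠ 0)
  have hnpos : (0 : ℝ) < n := by exact_mod_cast (by omega : 0 < n)
  rw [neg_one_pow_mul_eq_exp n (by omega) hμ]
  constructor
  · intro h
    have hz : z ≠ 0 := by
      rintro rfl
      rw [zero_pow (by omega)] at h
      exact Complex.exp_ne_zero _ h.symm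
    rw [← Complex.exp_log hz, ← Complex.exp_nat_mul, Complex.exp_eq_exp_iff_exists_int] at h
    obtain ⟨q, hq⟩ := h
    have hlog : Complex.log z = ((Real.log μ : ℝ) +
        Real.pi * Complex.I * (((n : ℝ) - 2 * (-q : ℤ) - 1 : ℝ) : ℂ)) / n := by
      rw [eq_div_iff hn0, mul_comm, hq]
      push_cast
      ring
    have him : (n : ℝ) * (Complex.log z).im = Real.pi * ((n : ℝ) + 2 * q - 1) := by
      have := congrArg Complex.im hq
      simp at this
      linarith
    have hlo := Complex.neg_pi_lt_log_im z
    have hhi := Complex.log_im_le_pi z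
    have h1 : -(n : ℝ) < (n : ℝ) + 2 * q - 1 := by
      have := mul_lt_mul_of_pos_left hlo hnpos
      refine lt_of_mul_lt_mul_left ?_ Real.pi_pos.le
      linarith
    have h2 : (n : ℝ) + 2 * q - 1 ≤ n := by
      have := mul_le_mul_of_nonneg_left hhi hnpos.le
      refine le_of_mul_le_mul_left ?_ Real.pi_pos
      linarith
    have h1' : -(n : ℤ) < n + 2 * q - 1 := by exact_mod_cast h1
    have h2' : (n : ℤ) + 2 * q - 1 ≤ n := by
      have h3 : (n : ℝ) + 2 * q ≤ n + 1 := by linarith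
      have h4 : (n : ℤ) + 2 * q ≤ n + 1 := by exact_mod_cast h3
      omega
    exact ⟨-q, by omega, by omega, hz, hlog⟩
  · rintro ⟨q, -, -, hz, hlog⟩
    rw [← Complex.exp_log hz, ← Complex.exp_nat_mul, Complex.exp_eq_exp_iff_exists_int, hlog]
    refine ⟨-q, ?_⟩
    rw [mul_div_cancel₀ _ hn0]
    push_cast
    ring

/-- The value of `-z ^ α` when `Log z = (log μ + iπm) / n`; the sign is absorbed as `exp (iπ)`. -/
theorem neg_exp_eq (n : ℕ) (hn : 2 ≤ n) {μ : ℝ} (hμ : 0 < μ) (α m : ℝ) :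
    -Complex.exp (((Real.log μ : ℝ) + Real.pi * Complex.I * (m : ℂ)) / n * (α : ℂ)) =
      ((μ ^ (α / n) : ℝ) : ℂ) *
        Complex.exp (Real.pi * Complex.I * (((n : ℝ) + m * α : ℝ) : ℂ) / n) := by
  have hn0 : (n : ℂ) ≠ 0 := by exact_mod_cast (by omega : n ≠ 0)
  rw [Real.rpow_def_of_pos hμ, Complex.ofReal_exp, ← Complex.exp_add, ← neg_one_mul,
    ← Complex.exp_pi_mul_I, ← Complex.exp_add]
  congr 1
  push_cast
  field_simp
  ring

/-- Scalar core of the point spectrum of `−Λₙ^α`: for `n ≥ 2`, real `μ > 0` and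
`0 < α ≤ 1`, the set `{ −z^α : z^n = (−1)^{n−1}μ }` (principal power) is the
union, over `k = 0, …, ⌊(n−1)/2⌋`, of the pairs
`{ μ^{α/n}·exp(iπ(n−(n−2k−1)α)/n), μ^{α/n}·exp(iπ(n+(n−2k−1)α)/n) }`. -/
theorem eigenvalue_locations_fractional (n : ℕ) (hn : 2 ≤ n) (μ : ℝ) (hμ : 0 < μ)
    (α : ℝ) (hα : 0 < α) (hα1 : α ≤ 1) :
    (fun z : ℂ => -(z ^ (α : ℂ))) '' {z : ℂ | z ^ n = (-1 : ℂ) ^ (n - 1) * (μ : ℂ)} =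
      ⋃ k ∈ Finset.Iic ((n - 1) / 2),
        ({((μ ^ (α / n) : ℝ) : ℂ) *
            Complex.exp (Real.pi * Complex.I *
              ((((n : ℝ) - ((n : ℝ) - 2 * k - 1) * α) : ℝ) : ℂ) / n),
          ((μ ^ (α / n) : ℝ) : ℂ) *
            Complex.exp (Real.pi * Complex.I *
              ((((n : ℝ) + ((n : ℝ) - 2 * k - 1) * α) : ℝ) : ℂ) / n)} :
          Set ℂ) := by
  have hn0 : (n : ℂ) ≠ 0 := by exact_mod_cast (by omega : n ≠ 0)
  have hnpos : (0 : ℝ) < n := by exact_mod_cast (by omega : 0 < n)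
  -- Each admissible index `q` comes from an actual root.
  have key : ∀ q : ℤ, 0 ≤ q → q ≤ n - 1 →
      ((μ ^ (α / n) : ℝ) : ℂ) * Complex.exp (Real.pi * Complex.I *
        (((n : ℝ) + ((n : ℝ) - 2 * q - 1) * α : ℝ) : ℂ) / n) ∈
      (fun z : ℂ => -(z ^ (α : ℂ))) '' {z : ℂ | z ^ n = (-1 : ℂ) ^ (n - 1) * (μ : ℂ)} := by
    intro q h0 h1
    set w : ℂ := ((Real.log μ : ℝ) +
      Real.pi * Complex.I * (((n : ℝ) - 2 * q - 1 : ℝ) : ℂ)) / n with hw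
    have him : w.im = Real.pi * (((n : ℝ) - 2 * q - 1) / n) := by
      have : w = ((Real.log μ / n : ℝ) : ℂ) +
          ((Real.pi * (((n : ℝ) - 2 * q - 1) / n) : ℝ) : ℂ) * Complex.I := by
        rw [hw]; push_cast; ring
      rw [this]
      simp only [Complex.add_im, Complex.ofReal_im, Complex.im_ofReal_mul,
        Complex.I_im, mul_one, zero_add]
    have h0' : (0 : ℝ) ≤ q := by exact_mod_cast h0
    have h1' : (q : ℝ) ≤ n - 1 := by exact_mod_cast h1
    have hlog : Complex.log (Complex.exp w) = w := by
      apply Complex.log_exp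
      · rw [him]
        have : -1 < ((n : ℝ) - 2 * q - 1) / n := by rw [lt_div_iff₀ hnpos]; linarith
        nlinarith [Real.pi_pos]
      · rw [him]
        have : ((n : ℝ) - 2 * q - 1) / n ≤ 1 := by rw [div_le_iff₀ hnpos]; linarith
        nlinarith [Real.pi_pos]
    refine ⟨Complex.exp w, (root_iff n hn hμ _).2 ⟨q, h0, h1, Complex.exp_ne_zero _, hlog⟩, ?_⟩
    simp only
    rw [Complex.cpow_def_of_ne_zero (Complex.exp_ne_zero _), hlog, hw, neg_exp_eq n hn hμ]
  ext x
  simp only [Set.mem_iUnion, Finset.mem_Iic, Set.mem_insert_iff, Set.mem_singleton_iff, exists_prop]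
  constructor
  · rintro ⟨z, hz, rfl⟩
    obtain ⟨q, h0, h1, hz0, hlog⟩ := (root_iff n hn hμ z).1 hz
    simp only
    rw [Complex.cpow_def_of_ne_zero hz0, hlog, neg_exp_eq n hn hμ]
    lift q to ℕ using h0
    by_cases hq : q ≤ (n - 1) / 2
    · refine ⟨q, hq, Or.inr ?_⟩
      push_cast
      ring_nf
    -- Replacing `q` by `n - 1 - q` changes the sign of `m = n - 2q - 1`.
    · refine ⟨n - 1 - q, by omega, Or.inl ?_⟩
      have hc : ((n - 1 - q : ℕ) : ℝ) = (n : ℝ) - 1 - q := by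
        rw [Nat.cast_sub (by omega), Nat.cast_sub (by omega)]
        norm_num
      rw [hc]
      congr 5
      push_cast
      ring
  · rintro ⟨k, hk, rfl | rfl⟩
    · have := key (n - 1 - k) (by omega) (by omega)
      convert this using 6
      push_cast
      ring
    · simpa using key k (by omega) (by omega)
end
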